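/- arXiv:1212.1346 — 2 statements merged into one kernel-verified Lean document; each statement's English description precedes it below -/
import Mathlib

section
/- For every m ≥ 1 there exists a constant C > 0 such that for every h ≥ 1 and every context-free grammar in Chomsky normal form with h variables over a terminal alphabet Σ of m letters whose generated language contains no unary word, there exists a deterministic finite automaton over Σ with at most 2^{C·h} states that is Parikh equivalent to the grammar. -/
/-- A context-free grammar is in Chomsky normal form if every production has one of the
forms `B → CD` (with `C, D` different from the start variable), `B → a`, or `S → ε`. -/
def IsCNF {T : Type*} (G : ContextFreeGrammar T) : Prop :=
  ∀ r ∈ G.rules,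
    (∃ a : T, r.output = [Symbol.terminal a]) ∨
    (∃ C D : G.NT, C ≠ G.initial ∧ D ≠ G.initial ∧
      r.output = [Symbol.nonterminal C, Symbol.nonterminal D]) ∨
    (r.input = G.initial ∧ r.output = [])

/-- The Parikh map `ψ : (Fin m)^* → ℕ^m`, counting for each letter its number of
occurrences in the word. -/
def parikh {m : ℕ} (w : List (Fin m)) : Fin m → ℕ := fun i => w.count i

/-- The Parikh image `ψ(L)` of a language over the alphabet `Fin m`. -/
def parikhImage {m : ℕ} (L : Language (Fin m)) : Set (Fin m → ℕ) :=
  parikh '' L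

/-- A word is unary if all of its letters are equal to one single letter
(the empty word is unary). -/
def IsUnaryWord {α : Type*} (w : List α) : Prop :=
  ∀ c ∈ w, ∀ c' ∈ w, c = c'

/-!
Every derivation tree arises from one without a repeated variable on a path by inserting contexts
`X ⇒* … X …`. Only the insertions that contribute a new variable, at most `h` of them, have to be
kept; the others can be repeated arbitrarily often. So the Parikh image is a union of linear sets
whose offsets and periods have entries at most `2 ^ O(h)`.

If the coefficients of the periods are chosen lexicographically least, then distinct coefficient
vectors below the chosen one have distinct images. By counting, any `k` periods with large
coefficients then involve at least `k` letters, and Hall's theorem assigns to each of them a letter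
of its own that it contains. Absorbing the small coefficients into the offset leaves linear sets
with one period per letter, and there are only `2 ^ O(h)` of these for a fixed alphabet.

A deterministic automaton guesses nothing: a word for the `i`-th linear set starts with a block
`aᶜb` whose length `c` encodes `i`. This is possible because no vector is supported on a single
letter and because one nonzero period can be added to the offset sufficiently often; if this is not
possible, the vector has small entries and is recognized directly. After the offset has been read,
the automaton loops through periods, each of which is announced by its letter.
-/

open scoped Pointwise

section DerivationTrees

variable {α : Type*} [DecidableEq α] {G : ContextFreeGrammar α}

/-- `DerivationTree G A U v` says that `G` has a derivation tree with root `A`, built from binary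
and terminal productions, whose inner nodes carry exactly the variables in `U` and whose yield has
Parikh vector `v`. -/
inductive DerivationTree (G : ContextFreeGrammar α) : G.NT → Set G.NT → (α → ℕ) → Prop
  | leaf {A a} : ⟨A, [.terminal a]⟩ ∈ G.rules → DerivationTree G A {A} (Pi.single a 1)
  | node {A B C U₁ U₂ v₁ v₂} : ⟨A, [.nonterminal B, .nonterminal C]⟩ ∈ G.rules →
      DerivationTree G B U₁ v₁ → DerivationTree G C U₂ v₂ →
      DerivationTree G A (insert A (U₁ ∪ U₂)) (v₁ + v₂)

/-- `DerivationContext G A X U v` says that `G` has a derivation tree with root `A` and one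
unexpanded leaf `X`, whose inner nodes carry exactly the variables in `U` and whose terminal leaves
have Parikh vector `v`. -/
inductive DerivationContext (G : ContextFreeGrammar α) :
    G.NT → G.NT → Set G.NT → (α → ℕ) → Prop
  | hole {A} : DerivationContext G A A ∅ 0
  | left {A B C X U₁ U₂ v₁ v₂} : ⟨A, [.nonterminal B, .nonterminal C]⟩ ∈ G.rules →
      DerivationContext G B X U₁ v₁ → DerivationTree G C U₂ v₂ →
      DerivationContext G A X (insert A (U₁ ∪ U₂)) (v₁ + v₂)
  | right {A B C X U₁ U₂ v₁ v₂} : ⟨A, [.nonterminal B, .nonterminal C]⟩ ∈ G.rules →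
      DerivationTree G B U₁ v₁ → DerivationContext G C X U₂ v₂ →
      DerivationContext G A X (insert A (U₁ ∪ U₂)) (v₁ + v₂)

/-- The derivation trees in which no path from the root repeats a variable. -/
inductive PathSimpleTree (G : ContextFreeGrammar α) : G.NT → Set G.NT → (α → ℕ) → Prop
  | leaf {A a} : ⟨A, [.terminal a]⟩ ∈ G.rules → PathSimpleTree G A {A} (Pi.single a 1)
  | node {A B C U₁ U₂ v₁ v₂} : ⟨A, [.nonterminal B, .nonterminal C]⟩ ∈ G.rules →
      PathSimpleTree G B U₁ v₁ → PathSimpleTree G C U₂ v₂ → A ∉ U₁ ∪ U₂ →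
      PathSimpleTree G A (insert A (U₁ ∪ U₂)) (v₁ + v₂)

theorem DerivationContext.plug {A X : G.NT} {U U' : Set G.NT} {v v' : α → ℕ}
    (hc : DerivationContext G A X U v) (ht : DerivationTree G X U' v') :
    DerivationTree G A (U ∪ U') (v + v') := by
  induction hc with
  | hole => simpa using ht
  | @left A B C X U₁ U₂ v₁ v₂ hr _ h₂ ih =>
    convert DerivationTree.node hr (ih ht) h₂ using 1
    · rw [Set.insert_union, Set.union_right_comm]
    · rw [add_right_comm]
  | @right A B C X U₁ U₂ v₁ v₂ hr h₁ _ ih =>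
    convert DerivationTree.node hr h₁ (ih ht) using 1
    · rw [Set.insert_union, Set.union_assoc]
    · rw [add_assoc]

theorem DerivationTree.pump {A X : G.NT} {U W : Set G.NT} {v p : α → ℕ}
    (ht : DerivationTree G A U v) (hX : X ∈ U) (hc : DerivationContext G X X W p) :
    DerivationTree G A (U ∪ W) (v + p) := by
  induction ht with
  | leaf hr =>
    obtain rfl := Set.mem_singleton_iff.1 hX
    rw [Set.union_comm, add_comm]
    exact hc.plug (.leaf hr)
  | @node A B C U₁ U₂ v₁ v₂ hr h₁ h₂ ih₁ ih₂ =>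
    rcases hX with rfl | hX | hX
    · rw [Set.union_comm, add_comm]
      exact hc.plug (.node hr h₁ h₂)
    · convert DerivationTree.node hr (ih₁ hX) h₂ using 1
      · rw [Set.insert_union, Set.union_right_comm]
      · rw [add_right_comm]
    · convert DerivationTree.node hr h₁ (ih₂ hX) using 1
      · rw [Set.insert_union, Set.union_assoc]
      · rw [add_assoc]

theorem PathSimpleTree.root_mem {A : G.NT} {U : Set G.NT} {v : α → ℕ}
    (ht : PathSimpleTree G A U v) : A ∈ U := by
  cases ht <;> simp

theorem PathSimpleTree.derivationTree {A : G.NT} {U : Set G.NT} {v : α → ℕ}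
    (ht : PathSimpleTree G A U v) : DerivationTree G A U v := by
  induction ht with
  | leaf hr => exact .leaf hr
  | node hr _ _ _ ih₁ ih₂ => exact .node hr ih₁ ih₂

theorem PathSimpleTree.exists_split {A X : G.NT} {U : Set G.NT} {v : α → ℕ}
    (ht : PathSimpleTree G A U v) (hX : X ∈ U) :
    ∃ U₁ U₂ v₁ v₂, DerivationContext G A X U₁ v₁ ∧ PathSimpleTree G X U₂ v₂ ∧
      U₁ ∪ U₂ = U ∧ v₁ + v₂ = v := by
  induction ht with
  | leaf hr =>
    obtain rfl := Set.mem_singleton_iff.1 hX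
    exact ⟨_, _, _, _, .hole, .leaf hr, Set.empty_union _, zero_add _⟩
  | @node A B C W₁ W₂ w₁ w₂ hr h₁ h₂ hA ih₁ ih₂ =>
    rcases hX with rfl | hX | hX
    · exact ⟨_, _, _, _, .hole, .node hr h₁ h₂ hA, Set.empty_union _, zero_add _⟩
    · obtain ⟨U₁, U₂, v₁, v₂, hc, ht, rfl, rfl⟩ := ih₁ hX
      refine ⟨_, _, _, _, .left hr hc h₂.derivationTree, ht, ?_, ?_⟩
      · rw [Set.insert_union, Set.union_right_comm]
      · rw [add_right_comm]
    · obtain ⟨U₁, U₂, v₁, v₂, hc, ht, rfl, rfl⟩ := ih₂ hX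
      refine ⟨_, _, _, _, .right hr h₁.derivationTree hc, ht, ?_, ?_⟩
      · rw [Set.insert_union, Set.union_assoc]
      · rw [add_assoc]

theorem PathSimpleTree.le_two_pow_ncard [Finite G.NT] {A : G.NT} {U : Set G.NT} {v : α → ℕ}
    (ht : PathSimpleTree G A U v) (a : α) : v a ≤ 2 ^ U.ncard := by
  induction ht with
  | @leaf A b _ =>
    have : (Pi.single b 1 : α → ℕ) a ≤ 1 := by rw [Pi.single_apply]; split_ifs <;> simp
    exact this.trans Nat.one_le_two_pow
  | @node A _ _ U₁ U₂ v₁ v₂ _ _ _ hA ih₁ ih₂ =>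
    have h₁ : 2 ^ U₁.ncard ≤ 2 ^ (U₁ ∪ U₂).ncard :=
      Nat.pow_le_pow_right two_pos (Set.ncard_le_ncard Set.subset_union_left)
    have h₂ : 2 ^ U₂.ncard ≤ 2 ^ (U₁ ∪ U₂).ncard :=
      Nat.pow_le_pow_right two_pos (Set.ncard_le_ncard Set.subset_union_right)
    rw [Set.ncard_insert_of_notMem hA, pow_succ, Pi.add_apply]
    linarith

theorem PathSimpleTree.le_two_pow [Finite G.NT] {A : G.NT} {U : Set G.NT} {v : α → ℕ}
    (ht : PathSimpleTree G A U v) (a : α) : v a ≤ 2 ^ Nat.card G.NT :=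
  (ht.le_two_pow_ncard a).trans (Nat.pow_le_pow_right two_pos (Set.ncard_le_card U))

/-- The Parikh vectors bounded by `b` of the contexts `X ⇒* … X …` that can be inserted into a
derivation tree with variable set `U` without introducing further variables. -/
def pumpVectors (G : ContextFreeGrammar α) (b : ℕ) (U : Set G.NT) : Set (α → ℕ) :=
  {p | ∃ X ∈ U, ∃ W ⊆ U, DerivationContext G X X W p ∧ ∀ a, p a ≤ b}

theorem pumpVectors_mono {b : ℕ} {U U' : Set G.NT} (h : U ⊆ U') :
    pumpVectors G b U ⊆ pumpVectors G b U' :=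
  fun _ ⟨X, hX, W, hW, hc⟩ => ⟨X, h hX, W, hW.trans h, hc⟩

theorem DerivationTree.add_mem_closure {A : G.NT} {U : Set G.NT} {v q : α → ℕ} {b : ℕ}
    (ht : DerivationTree G A U v) (hq : q ∈ AddSubmonoid.closure (pumpVectors G b U)) :
    DerivationTree G A U (v + q) := by
  induction hq using AddSubmonoid.closure_induction_right with
  | zero => rwa [add_zero]
  | add_right x _ p hp ih =>
    obtain ⟨X, hX, W, hW, hc, -⟩ := hp
    rw [← add_assoc, ← Set.union_eq_left.2 hW]
    exact ih.pump hX hc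

/-- `PumpChain G b U₀ U q` says that successive insertions of contexts with Parikh vectors bounded
by `b` and of total Parikh vector `q` turn a derivation tree with variable set `U₀` into one with
variable set `U`. -/
inductive PumpChain (G : ContextFreeGrammar α) (b : ℕ) :
    Set G.NT → Set G.NT → (α → ℕ) → Prop
  | refl {U} : PumpChain G b U U 0
  | step {U₀ U W X q p} : PumpChain G b U₀ U q → X ∈ U → DerivationContext G X X W p →
      (∀ a, p a ≤ b) → PumpChain G b U₀ (U ∪ W) (q + p)

namespace PumpChain

variable {b : ℕ}

theorem single {U W : Set G.NT} {X : G.NT} {p : α → ℕ} (hX : X ∈ U)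
    (hc : DerivationContext G X X W p) (hp : ∀ a, p a ≤ b) : PumpChain G b U (U ∪ W) p := by
  simpa only [zero_add] using PumpChain.refl.step hX hc hp

theorem trans {U₁ U₂ U₃ : Set G.NT} {q₁ q₂ : α → ℕ}
    (h₁ : PumpChain G b U₁ U₂ q₁) (h₂ : PumpChain G b U₂ U₃ q₂) :
    PumpChain G b U₁ U₃ (q₁ + q₂) := by
  induction h₂ with
  | refl => rwa [add_zero]
  | step _ hX hc hp ih => rw [← add_assoc]; exact ih.step hX hc hp

theorem union_left (S : Set G.NT) {U₀ U : Set G.NT} {q : α → ℕ}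
    (h : PumpChain G b U₀ U q) : PumpChain G b (S ∪ U₀) (S ∪ U) q := by
  induction h with
  | refl => exact .refl
  | step _ hX hc hp ih => rw [← Set.union_assoc]; exact ih.step (.inr hX) hc hp

theorem union {U₁ U₂ W₁ W₂ : Set G.NT} {q₁ q₂ : α → ℕ}
    (h₁ : PumpChain G b W₁ U₁ q₁) (h₂ : PumpChain G b W₂ U₂ q₂) :
    PumpChain G b (W₁ ∪ W₂) (U₁ ∪ U₂) (q₁ + q₂) := by
  have h := h₁.union_left W₂
  rw [Set.union_comm W₂ W₁, Set.union_comm W₂ U₁] at h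
  exact h.trans (h₂.union_left U₁)

theorem exists_derivationTree [Finite G.NT] {A : G.NT} {U₀ U : Set G.NT} {v₀ q : α → ℕ}
    {c : ℕ} (h : PumpChain G b U₀ U q) (ht : DerivationTree G A U₀ v₀) (hv₀ : ∀ a, v₀ a ≤ c) :
    ∃ w, ∃ q' ∈ AddSubmonoid.closure (pumpVectors G b U), DerivationTree G A U w ∧
      (∀ a, w a ≤ c + U.ncard * b) ∧ v₀ + q = w + q' := by
  induction h with
  | refl => exact ⟨v₀, 0, zero_mem _, ht, fun a => (hv₀ a).trans (Nat.le_add_right _ _), rfl⟩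
  | @step U W X q p _ hX hc hp ih =>
    obtain ⟨w, q', hq', hw, hwc, heq⟩ := ih
    by_cases hW : W ⊆ U
    · rw [Set.union_eq_left.2 hW]
      have hpU : p ∈ pumpVectors G b U := ⟨X, hX, W, hW, hc, hp⟩
      exact ⟨w, q' + p, add_mem hq' (AddSubmonoid.subset_closure hpU), hw, hwc,
        by rw [← add_assoc, heq, add_assoc]⟩
    · have hlt : U.ncard + 1 ≤ (U ∪ W).ncard := Set.ncard_lt_ncard
        ⟨Set.subset_union_left, fun h => hW (Set.subset_union_right.trans h)⟩
      refine ⟨w + p, q', AddSubmonoid.closure_mono (pumpVectors_mono Set.subset_union_left) hq',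
        hw.pump hX hc, fun a => ?_, by rw [← add_assoc, heq, add_right_comm]⟩
      calc w a + p a ≤ c + (U.ncard + 1) * b := by linarith [hwc a, hp a]
        _ ≤ c + (U ∪ W).ncard * b := by gcongr

end PumpChain

theorem PathSimpleTree.exists_pumpChain_node [Finite G.NT] {A B C : G.NT} {W₁ W₂ : Set G.NT}
    {w₁ w₂ : α → ℕ} (hr : ⟨A, [.nonterminal B, .nonterminal C]⟩ ∈ G.rules)
    (h₁ : PathSimpleTree G B W₁ w₁) (h₂ : PathSimpleTree G C W₂ w₂) :
    ∃ U₀ v₀ q, PathSimpleTree G A U₀ v₀ ∧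
      PumpChain G (2 ^ (Nat.card G.NT + 1)) U₀ (insert A (W₁ ∪ W₂)) q ∧ w₁ + w₂ = v₀ + q := by
  have hle {v₁ v₂ : α → ℕ} {a} (hv₁ : v₁ ≤ w₁) (hv₂ : v₂ ≤ w₂) :
      v₁ a + v₂ a ≤ 2 ^ (Nat.card G.NT + 1) := by
    rw [pow_succ, mul_two]
    exact add_le_add ((hv₁ a).trans (h₁.le_two_pow a)) ((hv₂ a).trans (h₂.le_two_pow a))
  by_cases hA₁ : A ∈ W₁
  · obtain ⟨U₁, U₂, v₁, v₂, hc, ht, rfl, rfl⟩ := h₁.exists_split hA₁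
    have hpump := DerivationContext.left hr hc h₂.derivationTree
    refine ⟨U₂, v₂, _, ht, ?_, by rw [add_comm v₁, add_assoc]⟩
    convert PumpChain.single ht.root_mem hpump fun a => hle le_self_add le_rfl using 1
    rw [Set.union_comm U₂, Set.insert_union, Set.union_right_comm]
  by_cases hA₂ : A ∈ W₂
  · obtain ⟨U₁, U₂, v₁, v₂, hc, ht, rfl, rfl⟩ := h₂.exists_split hA₂
    have hpump := DerivationContext.right hr h₁.derivationTree hc
    refine ⟨U₂, v₂, _, ht, ?_, by rw [← add_assoc, add_comm]⟩
    convert PumpChain.single ht.root_mem hpump fun a => hle le_rfl le_self_add using 1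
    rw [Set.union_comm U₂, Set.insert_union, Set.union_assoc]
  · exact ⟨_, _, 0, .node hr h₁ h₂ (by simp [hA₁, hA₂]), .refl, (add_zero _).symm⟩

theorem DerivationTree.exists_pumpChain [Finite G.NT] {A : G.NT} {U : Set G.NT} {v : α → ℕ}
    (ht : DerivationTree G A U v) :
    ∃ U₀ v₀ q, PathSimpleTree G A U₀ v₀ ∧ PumpChain G (2 ^ (Nat.card G.NT + 1)) U₀ U q ∧
      v = v₀ + q := by
  induction ht with
  | leaf hr => exact ⟨_, _, 0, .leaf hr, .refl, (add_zero _).symm⟩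
  | @node A B C U₁ U₂ v₁ v₂ hr _ _ ih₁ ih₂ =>
    obtain ⟨W₁, w₁, q₁, hw₁, hq₁, rfl⟩ := ih₁
    obtain ⟨W₂, w₂, q₂, hw₂, hq₂, rfl⟩ := ih₂
    obtain ⟨U₀, v₀, q, hv₀, hq, heq⟩ := hw₁.exists_pumpChain_node hr hw₂
    refine ⟨U₀, v₀, q + (q₁ + q₂), hv₀, hq.trans ((hq₁.union hq₂).union_left {A}), ?_⟩
    rw [add_add_add_comm, heq, add_assoc]

/-- `IsSemilinearLE N Z`: the set `Z` is a union of linear sets `o + ⟨P⟩`, where the entries of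
`o` and of all members of the period set `P` are at most `N`. -/
def IsSemilinearLE (N : ℕ) (Z : Set (α → ℕ)) : Prop :=
  ∀ z ∈ Z, ∃ (o : α → ℕ) (P : Set (α → ℕ)), (∀ a, o a ≤ N) ∧ (∀ p ∈ P, ∀ a, p a ≤ N) ∧
    z ∈ o +ᵥ (AddSubmonoid.closure P : Set (α → ℕ)) ∧
    o +ᵥ (AddSubmonoid.closure P : Set (α → ℕ)) ⊆ Z

theorem isSemilinearLE_derivationTree [Finite G.NT] (A : G.NT) :
    IsSemilinearLE ((Nat.card G.NT + 1) * 2 ^ (Nat.card G.NT + 1))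
      {v | ∃ U, DerivationTree G A U v} := by
  rintro _ ⟨U, ht⟩
  obtain ⟨U₀, v₀, q, hv₀, hq, rfl⟩ := ht.exists_pumpChain
  obtain ⟨w, q', hq', hw, hwle, heq⟩ := hq.exists_derivationTree hv₀.derivationTree hv₀.le_two_pow
  refine ⟨w, pumpVectors G (2 ^ (Nat.card G.NT + 1)) U, fun a => (hwle a).trans ?_, ?_,
    ⟨q', hq', heq.symm⟩, ?_⟩
  · have : U.ncard * 2 ^ (Nat.card G.NT + 1) ≤ Nat.card G.NT * 2 ^ (Nat.card G.NT + 1) :=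
      Nat.mul_le_mul_right _ (Set.ncard_le_card U)
    have : 2 ^ Nat.card G.NT ≤ 2 ^ (Nat.card G.NT + 1) := Nat.pow_le_pow_right two_pos (by simp)
    linarith
  · rintro p ⟨X, -, W, -, -, hp⟩ a
    exact (hp a).trans (Nat.le_mul_of_pos_left _ (Nat.succ_pos _))
  · rintro _ ⟨x, hx, rfl⟩
    exact ⟨U, hw.add_mem_closure hx⟩

end DerivationTrees

section ParikhMap

variable {m : ℕ}

theorem parikh_singleton (a : Fin m) : parikh [a] = Pi.single a 1 := by
  ext i
  simp [parikh, List.count_singleton, Pi.single_apply, @eq_comm _ i]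

theorem single_add_single_le {ι : Type*} [DecidableEq ι] {v : ι → ℕ} {a b : ι} {k l : ℕ}
    (hab : a ≠ b) (ha : k ≤ v a) (hb : l ≤ v b) : Pi.single a k + Pi.single b l ≤ v := by
  intro c
  rcases eq_or_ne c a with rfl | hca
  · simpa [hab] using ha
  rcases eq_or_ne c b with rfl | hcb
  · simpa [hca] using hb
  · simp [hca, hcb]

theorem parikh_append (u w : List (Fin m)) : parikh (u ++ w) = parikh u + parikh w :=
  funext fun _ => List.count_append

theorem parikh_cons (a : Fin m) (w : List (Fin m)) :
    parikh (a :: w) = Pi.single a 1 + parikh w := by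
  rw [← parikh_singleton, ← parikh_append, List.singleton_append]

theorem parikh_replicate (n : ℕ) (a : Fin m) : parikh (List.replicate n a) = Pi.single a n := by
  induction n with
  | zero => rw [Pi.single_zero]; rfl
  | succ n ih => rw [List.replicate_succ, parikh_cons, ih, ← Pi.single_add, add_comm]

theorem exists_parikh_eq (v : Fin m → ℕ) : ∃ w, parikh w = v := by
  refine ⟨(Finsupp.toMultiset (Finsupp.equivFunOnFinite.symm v)).toList, funext fun i => ?_⟩
  rw [parikh, ← Multiset.coe_count, Multiset.coe_toList, Finsupp.count_toMultiset]
  rfl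

theorem exists_parikh_add_eq {u v : Fin m → ℕ} (huv : u ≤ v) : ∃ w, u + parikh w = v := by
  obtain ⟨w, hw⟩ := exists_parikh_eq (v - u)
  exact ⟨w, by rw [hw, add_tsub_cancel_of_le huv]⟩

theorem exists_pos_of_not_isUnaryWord {w : List (Fin m)} (hw : ¬IsUnaryWord w) :
    ∃ a b, a ≠ b ∧ 0 < parikh w a ∧ 0 < parikh w b := by
  simp only [IsUnaryWord, not_forall] at hw
  obtain ⟨a, ha, b, hb, hab⟩ := hw
  exact ⟨a, b, hab, List.count_pos_iff.2 ha, List.count_pos_iff.2 hb⟩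

end ParikhMap

section Grammars

variable {m : ℕ} {G : ContextFreeGrammar (Fin m)}

theorem DerivationTree.exists_derives {A : G.NT} {U : Set G.NT} {v : Fin m → ℕ}
    (ht : DerivationTree G A U v) :
    ∃ w, parikh w = v ∧ G.Derives [.nonterminal A] (w.map .terminal) := by
  induction ht with
  | @leaf A a hr =>
    exact ⟨[a], parikh_singleton a, ContextFreeGrammar.Produces.single
      ⟨_, hr, ContextFreeRule.Rewrites.input_output⟩⟩
  | @node A B C _ _ _ _ hr _ _ ih₁ ih₂ =>
    obtain ⟨w₁, rfl, h₁⟩ := ih₁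
    obtain ⟨w₂, rfl, h₂⟩ := ih₂
    have hA : G.Derives [.nonterminal A] ([.nonterminal B] ++ [.nonterminal C]) :=
      ContextFreeGrammar.Produces.single ⟨_, hr, ContextFreeRule.Rewrites.input_output⟩
    refine ⟨w₁ ++ w₂, parikh_append w₁ w₂, ?_⟩
    rw [List.map_append]
    exact hA.trans ((h₁.append_right _).trans (h₂.append_left _))

/-- The Parikh vectors of the derivation trees that a symbol can be expanded to, a terminal being
expanded to itself only. -/
def symbolVectors (G : ContextFreeGrammar (Fin m)) : Symbol (Fin m) G.NT → Set (Fin m → ℕ)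
  | .terminal a => {Pi.single a 1}
  | .nonterminal A => {v | ∃ U, DerivationTree G A U v}

/-- The Parikh vectors of the forests of derivation trees that a sentential form can be expanded
to; the sum is a pointwise sum of sets. -/
def sententialVectors (G : ContextFreeGrammar (Fin m)) (s : List (Symbol (Fin m) G.NT)) :
    Set (Fin m → ℕ) :=
  (s.map (symbolVectors G)).sum

theorem sententialVectors_append (s t : List (Symbol (Fin m) G.NT)) :
    sententialVectors G (s ++ t) = sententialVectors G s + sententialVectors G t := by
  simp only [sententialVectors, List.map_append, List.sum_append]

theorem sententialVectors_singleton (x : Symbol (Fin m) G.NT) :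
    sententialVectors G [x] = symbolVectors G x := by
  simp only [sententialVectors, List.map_singleton, List.sum_singleton]

theorem sententialVectors_map_terminal (w : List (Fin m)) :
    sententialVectors G (w.map .terminal) = {parikh w} := by
  induction w with
  | nil => rfl
  | cons a w ih =>
    rw [List.map_cons, ← List.singleton_append, sententialVectors_append, ih,
      sententialVectors_singleton, parikh_cons]
    exact Set.singleton_add_singleton

theorem IsCNF.sententialVectors_output_subset (hG : IsCNF G) (hε : [] ∉ G.language)
    {r : ContextFreeRule (Fin m) G.NT} (hr : r ∈ G.rules) :
    sententialVectors G r.output ⊆ symbolVectors G (.nonterminal r.input) := by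
  obtain ⟨A, s⟩ := r
  rcases hG _ hr with ⟨a, rfl⟩ | ⟨C, D, -, -, rfl⟩ | ⟨rfl, rfl⟩
  · rw [sententialVectors_singleton]
    rintro _ rfl
    exact ⟨_, .leaf hr⟩
  · rw [← List.singleton_append, sententialVectors_append, sententialVectors_singleton,
      sententialVectors_singleton]
    rintro _ ⟨v₁, ⟨U₁, h₁⟩, v₂, ⟨U₂, h₂⟩, rfl⟩
    exact ⟨_, .node hr h₁ h₂⟩
  · exact absurd (ContextFreeGrammar.Produces.single
      ⟨_, hr, ContextFreeRule.Rewrites.input_output⟩) hε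

theorem IsCNF.sententialVectors_subset_of_derives (hG : IsCNF G) (hε : [] ∉ G.language)
    {s t : List (Symbol (Fin m) G.NT)} (hst : G.Derives s t) :
    sententialVectors G t ⊆ sententialVectors G s := by
  induction hst with
  | refl => rfl
  | tail _ hp ih =>
    obtain ⟨r, hr, hrw⟩ := hp
    obtain ⟨p, q, rfl, rfl⟩ := hrw.exists_parts
    refine Set.Subset.trans ?_ ih
    simp only [sententialVectors_append, sententialVectors_singleton]
    gcongr
    exact hG.sententialVectors_output_subset hε hr

theorem IsCNF.parikhImage_language (hG : IsCNF G) (hε : [] ∉ G.language) :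
    parikhImage G.language = {v | ∃ U, DerivationTree G G.initial U v} := by
  ext v
  constructor
  · rintro ⟨w, hw, rfl⟩
    have h := hG.sententialVectors_subset_of_derives hε hw
    rw [sententialVectors_map_terminal, sententialVectors_singleton] at h
    exact h rfl
  · rintro ⟨U, ht⟩
    obtain ⟨w, rfl, hw⟩ := ht.exists_derives
    exact ⟨w, hw, rfl⟩

end Grammars

section LinearSets

-- The lexicographically least `n'` works: if `x, y ≤ n'` had the same image and `x < y`, then
-- replacing the part `y` of `n'` by `x` would give a smaller vector.
theorem exists_map_eq_injOn_Iic {ι M F : Type*} [Finite ι] [Add M] [FunLike F (ι → ℕ) M]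
    [AddHomClass F (ι → ℕ) M] (f : F) (n : ι → ℕ) :
    ∃ n', f n' = f n ∧ Set.InjOn f (Set.Iic n') := by
  let _ : LinearOrder ι := LinearOrder.lift' (Finite.equivFin ι) (Equiv.injective _)
  obtain ⟨n', hn', hmin⟩ := WellFounded.has_min (wellFounded_lt (α := Lex (ι → ℕ)))
    {x | f (ofLex x) = f n} ⟨toLex n, rfl⟩
  refine ⟨ofLex n', hn', fun x hx y hy hxy => ?_⟩
  have not_lt {x y : ι → ℕ} (hy : y ≤ ofLex n') (hxy : f x = f y) : ¬toLex x < toLex y := by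
    intro hlt
    have hn : ofLex n' = ofLex n' - y + y := (tsub_add_cancel_of_le hy).symm
    refine hmin (toLex (ofLex n' - y + x)) ?_ ?_
    · rw [Set.mem_ofPred_eq, ofLex_toLex, map_add, hxy, ← map_add, ← hn]
      exact hn'
    · calc toLex (ofLex n' - y + x) < toLex (ofLex n' - y + y) :=
            add_lt_add_right hlt (toLex (ofLex n' - y))
        _ = n' := by rw [← hn, toLex_ofLex]
  rcases lt_trichotomy (toLex x) (toLex y) with h | h | h
  · exact absurd h (not_lt hy hxy)
  · exact toLex.injective h
  · exact absurd h (not_lt hx hxy.symm)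

theorem prod_add_one_le_of_injOn_Iic {ι α : Type*} [Fintype ι] [Fintype α]
    {f : (ι → ℕ) → α → ℕ} {x : ι → ℕ} (hf : Monotone f) (hinj : Set.InjOn f (Set.Iic x)) :
    ∏ i, (x i + 1) ≤ ∏ a, (f x a + 1) := by
  classical
  have h : (Finset.Iic x).card ≤ (Finset.Iic (f x)).card :=
    Finset.card_le_card_of_injOn f (fun y hy => Finset.mem_coe.2
      (Finset.mem_Iic.2 (hf (Finset.mem_Iic.1 hy)))) (by rwa [Finset.coe_Iic])
  simpa only [Pi.card_Iic, Nat.card_Iic] using h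

variable {ι α : Type*} [Fintype ι] {N : ℕ}

theorem pow_card_le_of_injOn_linearCombination [Finite α] {p : ι → α → ℕ} {n : ι → ℕ} {D : ℕ}
    (hp : ∀ i a, p i a ≤ N) (hn : Set.InjOn (Fintype.linearCombination ℕ p) (Set.Iic n))
    {s : Finset ι} (hs : ∀ i ∈ s, D ≤ n i) {t : Finset α} (ht : ∀ i ∈ s, ∀ a ∉ t, p i a = 0) :
    (D + 1) ^ s.card ≤ (Fintype.card ι * (D * N) + 1) ^ t.card := by
  classical
  have := Fintype.ofFinite α
  let x : ι → ℕ := fun i => if i ∈ s then D else 0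
  have hx_apply (a : α) : Fintype.linearCombination ℕ p x a = ∑ i ∈ s, D * p i a := by
    simp only [Fintype.linearCombination_apply, Finset.sum_apply, Pi.smul_apply, smul_eq_mul, x,
      ite_mul, zero_mul, Finset.sum_ite_mem, Finset.univ_inter]
  have hxn : x ≤ n := fun i => by
    by_cases hi : i ∈ s <;> simp [x, hi, hs]
  have hmono : Monotone (Fintype.linearCombination ℕ p) := fun y z hyz => by
    simp only [Fintype.linearCombination_apply]
    gcongr with i
    exact hyz i
  calc (D + 1) ^ s.card = ∏ i ∈ s, (x i + 1) := by
        rw [← Finset.prod_const]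
        exact Finset.prod_congr rfl fun i hi => by simp [x, hi]
    _ = ∏ i, (x i + 1) := Finset.prod_subset s.subset_univ fun i _ hi => by simp [x, hi]
    _ ≤ ∏ a, (Fintype.linearCombination ℕ p x a + 1) :=
        prod_add_one_le_of_injOn_Iic hmono (hn.mono (Set.Iic_subset_Iic.2 hxn))
    _ = ∏ a ∈ t, (Fintype.linearCombination ℕ p x a + 1) :=
        (Finset.prod_subset t.subset_univ fun a _ ha => by
          rw [hx_apply, Finset.sum_eq_zero fun i hi => by rw [ht i hi a ha, mul_zero],
            zero_add]).symm
    _ ≤ (Fintype.card ι * (D * N) + 1) ^ t.card := Finset.prod_le_pow_card _ _ _ fun a _ => by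
        rw [hx_apply]
        have : ∑ i ∈ s, D * p i a ≤ s.card * (D * N) :=
          Finset.sum_le_card_nsmul _ _ _ fun i _ => Nat.mul_le_mul_left D (hp i a)
        have : s.card * (D * N) ≤ Fintype.card ι * (D * N) :=
          Nat.mul_le_mul_right _ s.card_le_univ
        lia

variable [Fintype α]

theorem card_le_card_of_injOn_linearCombination {p : ι → α → ℕ} {n : ι → ℕ} {D : ℕ}
    (hp : ∀ i a, p i a ≤ N) (hD : (Fintype.card ι * N + 1) ^ Fintype.card α ≤ D)
    (hn : Set.InjOn (Fintype.linearCombination ℕ p) (Set.Iic n)) {s : Finset ι}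
    (hs : ∀ i ∈ s, D ≤ n i) {t : Finset α} (ht : ∀ i ∈ s, ∀ a ∉ t, p i a = 0) :
    s.card ≤ t.card := by
  by_contra! hlt
  have : (D + 1) ^ (t.card + 1) ≤ D * (D + 1) ^ t.card := calc
    (D + 1) ^ (t.card + 1) ≤ (D + 1) ^ s.card := Nat.pow_le_pow_right (Nat.succ_pos _) hlt
    _ ≤ (Fintype.card ι * (D * N) + 1) ^ t.card :=
        pow_card_le_of_injOn_linearCombination hp hn hs ht
    _ ≤ ((Fintype.card ι * N + 1) * (D + 1)) ^ t.card := by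
        gcongr
        linarith [Nat.zero_le (Fintype.card ι * N), Nat.zero_le D]
    _ = (Fintype.card ι * N + 1) ^ t.card * (D + 1) ^ t.card := mul_pow _ _ _
    _ ≤ D * (D + 1) ^ t.card := by
        gcongr
        exact (Nat.pow_le_pow_right (Nat.succ_pos _) t.card_le_univ).trans hD
  rw [pow_succ'] at this
  linarith [Nat.pow_pos (n := t.card) (Nat.succ_pos D)]

theorem exists_injective_pos_of_injOn_linearCombination {p : ι → α → ℕ} {n : ι → ℕ} {D : ℕ}
    (hp : ∀ i a, p i a ≤ N) (hD : (Fintype.card ι * N + 1) ^ Fintype.card α ≤ D)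
    (hn : Set.InjOn (Fintype.linearCombination ℕ p) (Set.Iic n)) :
    ∃ σ : {i // D ≤ n i} → α, Function.Injective σ ∧
      ∀ i : {i // D ≤ n i}, 0 < p i (σ i) := by
  classical
  let support (i : {i // D ≤ n i}) : Finset α := {a | 0 < p i a}
  have hall (s : Finset {i // D ≤ n i}) : s.card ≤ (s.biUnion support).card := by
    rw [← Finset.card_map (Function.Embedding.subtype _)]
    refine card_le_card_of_injOn_linearCombination hp hD hn ?_ ?_
    · simp +contextual
    · simp +contextual [support]
  obtain ⟨σ, hσ, hmem⟩ := (Finset.all_card_le_biUnion_card_iff_exists_injective support).1 hall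
  exact ⟨σ, hσ, fun i => (Finset.mem_filter.1 (hmem i)).2⟩

/-- The linear set with offset `o` and periods `Q a`, indexed by the letters `a`. -/
def letterLinearSet {α : Type*} (o : α → ℕ) (Q : α → α → ℕ) : Set (α → ℕ) :=
  o +ᵥ (AddSubmonoid.closure (Set.range Q) : Set (α → ℕ))

/-- `IsLetterLinearUnion N Z`: the set `Z` is a union of linear sets with letter-indexed periods,
all of whose entries are at most `N`, such that each nonzero period contains its letter. -/
def IsLetterLinearUnion {α : Type*} (N : ℕ) (Z : Set (α → ℕ)) : Prop :=
  ∀ z ∈ Z, ∃ o Q, (∀ a, o a ≤ N) ∧ (∀ a b, Q a b ≤ N) ∧ (∀ a, Q a = 0 ∨ 0 < Q a a) ∧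
    z ∈ letterLinearSet o Q ∧ letterLinearSet o Q ⊆ Z

theorem exists_mem_letterLinearSet_of_linearCombination {p : ι → α → ℕ} {n : ι → ℕ} {D : ℕ}
    (hp : ∀ i a, p i a ≤ N) (hD : (Fintype.card ι * N + 1) ^ Fintype.card α ≤ D) :
    ∃ o Q, (∀ a, o a ≤ Fintype.card ι * (D * N)) ∧ (∀ a b, Q a b ≤ N) ∧
      (∀ a, Q a = 0 ∨ 0 < Q a a) ∧ Fintype.linearCombination ℕ p n ∈ letterLinearSet o Q ∧
      letterLinearSet o Q ⊆ AddSubmonoid.closure (Set.range p) := by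
  classical
  obtain ⟨n', hn', hinj⟩ := exists_map_eq_injOn_Iic (Fintype.linearCombination ℕ p) n
  obtain ⟨σ, hσ, hpos⟩ := exists_injective_pos_of_injOn_linearCombination hp hD hinj
  let Q : α → α → ℕ := Function.extend σ (fun i => p i) 0
  have hQσ (i : ι) (hi : D ≤ n' i) : Q (σ ⟨i, hi⟩) = p i := hσ.extend_apply _ _ _
  have hQ (a : α) : (∃ i, σ i = a ∧ Q a = p i) ∨ Q a = 0 := by
    by_cases ha : ∃ i, σ i = a
    · obtain ⟨i, rfl⟩ := ha
      exact .inl ⟨i, rfl, hσ.extend_apply _ _ _⟩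
    · exact .inr (Function.extend_apply' _ _ _ ha)
  have hp_mem (i : ι) : p i ∈ AddSubmonoid.closure (Set.range p) :=
    AddSubmonoid.subset_closure (Set.mem_range_self i)
  refine ⟨∑ i with ¬D ≤ n' i, n' i • p i, Q, fun a => ?_, fun a b => ?_, fun a => ?_,
    ⟨∑ i with D ≤ n' i, n' i • p i, sum_mem fun i hi => nsmul_mem ?_ _, ?_⟩, ?_⟩
  · rw [Finset.sum_apply]
    refine (Finset.sum_le_card_nsmul _ _ (D * N) fun i hi => ?_).trans
      (Nat.mul_le_mul_right _ (Finset.card_le_univ _))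
    exact Nat.mul_le_mul (not_le.1 (Finset.mem_filter.1 hi).2).le (hp i a)
  · rcases hQ a with ⟨i, -, h⟩ | h <;> simp [h, hp]
  · rcases hQ a with ⟨i, rfl, h⟩ | h
    · exact .inr (h ▸ hpos i)
    · exact .inl h
  · rw [← hQσ i (Finset.mem_filter.1 hi).2]
    exact AddSubmonoid.subset_closure (Set.mem_range_self _)
  · rw [← hn', Fintype.linearCombination_apply]
    exact (add_comm _ _).trans <| Finset.sum_filter_add_sum_filter_not _ _ _
  · rintro _ ⟨x, hx, rfl⟩
    refine add_mem (sum_mem fun i _ => nsmul_mem (hp_mem i) _)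
      (AddSubmonoid.closure_le.2 (Set.range_subset_iff.2 fun a => ?_) hx)
    rcases hQ a with ⟨i, -, h⟩ | h
    · exact h ▸ hp_mem i
    · exact h ▸ zero_mem _

/-- A bound on the offsets of the letter-indexed linear sets into which a submonoid of `ℕ ^ m`
decomposes if its generators have entries at most `N`. -/
def offsetBound (m N : ℕ) : ℕ :=
  (N + 1) ^ m * (((N + 1) ^ m * N + 1) ^ m * N)

theorem exists_mem_letterLinearSet_of_mem_closure {P : Set (α → ℕ)} {q : α → ℕ}
    (hP : ∀ p ∈ P, ∀ a, p a ≤ N) (hq : q ∈ AddSubmonoid.closure P) :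
    ∃ o Q, (∀ a, o a ≤ offsetBound (Fintype.card α) N) ∧ (∀ a b, Q a b ≤ N) ∧
      (∀ a, Q a = 0 ∨ 0 < Q a a) ∧ q ∈ letterLinearSet o Q ∧
      letterLinearSet o Q ⊆ AddSubmonoid.closure P := by
  classical
  have hsub : P ⊆ (Finset.Iic fun _ => N : Finset (α → ℕ)) := fun p hp =>
    Finset.mem_coe.2 (Finset.mem_Iic.2 (hP p hp))
  have : Fintype P := ((Finset.finite_toSet _).subset hsub).fintype
  have hcard : Fintype.card P ≤ (N + 1) ^ Fintype.card α := by
    rw [← Set.toFinset_card]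
    refine (Finset.card_le_card (Set.toFinset_subset.2 hsub)).trans ?_
    simp [Pi.card_Iic]
  rw [← Subtype.range_coe (s := P)] at hq ⊢
  obtain ⟨n, rfl⟩ := AddSubmonoid.exists_of_mem_closure_range _ _ hq
  obtain ⟨o, Q, ho, hQ⟩ := exists_mem_letterLinearSet_of_linearCombination (N := N) (n := n)
    (D := ((N + 1) ^ Fintype.card α * N + 1) ^ Fintype.card α)
    (fun (p : P) a => hP p p.2 a) (by gcongr)
  exact ⟨o, Q, fun a => (ho a).trans (Nat.mul_le_mul_right _ hcard), hQ⟩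

theorem IsSemilinearLE.isLetterLinearUnion {Z : Set (α → ℕ)} (hZ : IsSemilinearLE N Z) :
    IsLetterLinearUnion (N + offsetBound (Fintype.card α) N) Z := by
  intro z hz
  obtain ⟨w, P, hw, hP, ⟨q, hq, rfl⟩, hsub⟩ := hZ z hz
  obtain ⟨o, Q, ho, hQ, hQpos, hqo, hoQ⟩ := exists_mem_letterLinearSet_of_mem_closure hP hq
  have hadd : letterLinearSet (w + o) Q = w +ᵥ letterLinearSet o Q :=
    add_vadd w o (AddSubmonoid.closure (Set.range Q) : Set (α → ℕ))
  refine ⟨w + o, Q, fun a => add_le_add (hw a) (ho a),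
    fun a b => (hQ a b).trans (Nat.le_add_right _ _), hQpos, ?_, ?_⟩
  · rw [hadd]
    exact Set.vadd_mem_vadd_set hqo
  · rw [hadd]
    exact (Set.vadd_set_mono hoQ).trans hsub

end LinearSets

section Truncation

variable {α σ : Type*}

open Classical in
/-- The automaton `M` restricted to the states in `S`, where all transitions that leave `S` lead to
a dead state `none`. -/
noncomputable def truncate (M : DFA α σ) (S : Finset σ) : DFA α (Option S) where
  step s a := s.bind fun s => if h : M.step s a ∈ S then some ⟨M.step s a, h⟩ else none
  start := if h : M.start ∈ S then some ⟨M.start, h⟩ else none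
  accept := {s | ∃ q ∈ s, (q : σ) ∈ M.accept}

theorem mem_eval_truncate {M : DFA α σ} {S : Finset σ} (hS : ∀ s a, M.step s a ∈ S → s ∈ S)
    (w : List α) (q : S) : q ∈ (truncate M S).eval w ↔ M.eval w = q := by
  classical
  induction w using List.reverseRecOn generalizing q with
  | nil =>
    simp only [truncate, DFA.eval_nil, Option.mem_def, Option.dite_none_right_eq_some,
      Option.some.injEq, Subtype.ext_iff]
    exact ⟨fun h => h.2, fun h => ⟨h ▸ q.2, h⟩⟩
  | append_singleton w a ih =>
    simp only [DFA.eval_append_singleton]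
    constructor
    · intro h
      obtain ⟨s, hs, h⟩ := Option.bind_eq_some_iff.1 h
      rw [(ih s).1 hs]
      split_ifs at h
      exact congrArg Subtype.val (Option.some.inj h)
    · intro h
      have hmem : M.step (M.eval w) a ∈ S := h ▸ q.2
      refine Option.bind_eq_some_iff.2 ⟨⟨M.eval w, hS _ a hmem⟩, (ih _).2 rfl, ?_⟩
      rw [dif_pos hmem, Option.some.injEq, Subtype.ext_iff]
      exact h

theorem accepts_truncate {M : DFA α σ} {S : Finset σ} (hS : ∀ s a, M.step s a ∈ S → s ∈ S)
    (hM : M.accept ⊆ S) : (truncate M S).accepts = M.accepts := by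
  ext w
  constructor
  · rintro ⟨q, hq, hqM⟩
    rw [DFA.mem_accepts, (mem_eval_truncate hS w q).1 hq]
    exact hqM
  · intro hw
    exact ⟨⟨M.eval w, hM hw⟩, (mem_eval_truncate hS w _).2 rfl, hw⟩

end Truncation

/-- A family of linear sets with letter-indexed periods, together with a number `code i` that
identifies the `i`-th member: a word with Parikh vector `offset i` can start with `code i` copies of
a letter followed by a different letter. -/
structure CodedLinearFamily (m : ℕ) (ι : Type*) where
  offset : ι → Fin m → ℕ
  period : ι → Fin m → Fin m → ℕ
  code : ι → ℕ
  code_injective : Function.Injective code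
  two_le_code : ∀ i, 2 ≤ code i
  exists_letters : ∀ i, ∃ a b, a ≠ b ∧ code i ≤ offset i a ∧ 0 < offset i b
  period_eq_zero_or_pos : ∀ i a, period i a = 0 ∨ 0 < period i a a

namespace CodedLinearFamily

variable {m : ℕ} {ι : Type*} (F : CodedLinearFamily m ι)

/-- The `i`-th linear set of the family. -/
def linearSet (i : ι) : Set (Fin m → ℕ) :=
  letterLinearSet (F.offset i) (F.period i)

/-- The vector to be collected in phase `t` of reading a word for the `i`-th linear set: the offset
in phase `none`, the period with index `c` in phase `some c`. -/
def goal (i : ι) : Option (Fin m) → Fin m → ℕ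
  | none => F.offset i
  | some c => F.period i c

/-- A state `(none, v)` has read letters with Parikh vector `v` and has not yet chosen a linear
set. A state `(some (i, t), v)` has chosen the `i`-th linear set and has collected the vector `v`
of the letters read since the beginning of phase `t`. -/
abbrev State (m : ℕ) (ι : Type*) : Type _ :=
  Option (ι × Option (Fin m)) × (Fin m → ℕ)

open Classical in
/-- The transition function. The `i`-th linear set is chosen when the first `code i` letters agree
and the next letter differs from them; when a phase has reached its goal, the next letter `c`
starts the phase `some c`. -/
noncomputable def step : State m ι → Fin m → State m ι
  | (none, v), c =>
    if h : ∃ i, ∃ a ≠ c, v = Pi.single a (F.code i) then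
      (some (h.choose, none), v + Pi.single c 1)
    else (none, v + Pi.single c 1)
  | (some (i, t), v), c =>
    if v = F.goal i t then (some (i, some c), Pi.single c 1)
    else (some (i, t), v + Pi.single c 1)

/-- The infinite automaton that accepts, up to the order of letters, the linear sets of the family
and the vectors in `E`. -/
noncomputable def automaton (E : Set (Fin m → ℕ)) : DFA (Fin m) (State m ι) where
  step := F.step
  start := (none, 0)
  accept := {s | (∃ v ∈ E, s = (none, v)) ∨ ∃ i t, s = (some (i, t), F.goal i t)}

/-- The relation between a reachable state and the Parikh vector of the word read. -/
def Tracks : State m ι → (Fin m → ℕ) → Prop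
  | (none, v), x => x = v
  | (some (_, none), v), x => x = v
  | (some (i, some _), v), x => ∃ y ∈ F.linearSet i, x = y + v

variable {F}

theorem Tracks.mem_linearSet {i : ι} {t : Option (Fin m)} {x : Fin m → ℕ}
    (h : F.Tracks (some (i, t), F.goal i t) x) : x ∈ F.linearSet i := by
  cases t with
  | none =>
    obtain rfl : x = F.offset i := h
    exact ⟨0, zero_mem _, add_zero _⟩
  | some c =>
    obtain ⟨_, ⟨q, hq, rfl⟩, rfl⟩ := h
    exact ⟨q + F.period i c, add_mem hq (AddSubmonoid.subset_closure (Set.mem_range_self c)),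
      (add_assoc _ _ _).symm⟩

theorem Tracks.step {s : State m ι} {x : Fin m → ℕ} (h : F.Tracks s x) (c : Fin m) :
    F.Tracks (F.step s c) (x + Pi.single c 1) := by
  obtain ⟨_ | ⟨i, t⟩, v⟩ := s
  · obtain rfl : x = v := h
    simp only [CodedLinearFamily.step]
    split_ifs <;> rfl
  · simp only [CodedLinearFamily.step]
    split_ifs with hv
    · rw [hv] at h
      exact ⟨x, h.mem_linearSet, rfl⟩
    · cases t with
      | none => exact congrArg (· + _) h
      | some a =>
        obtain ⟨y, hy, rfl⟩ := h
        exact ⟨y, hy, add_assoc _ _ _⟩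

theorem tracks_eval (E : Set (Fin m → ℕ)) (w : List (Fin m)) :
    F.Tracks ((F.automaton E).eval w) (parikh w) := by
  induction w using List.reverseRecOn with
  | nil => rfl
  | append_singleton w c ih =>
    rw [DFA.eval_append_singleton, parikh_append, parikh_singleton]
    exact ih.step c

theorem parikhImage_automaton_subset (E : Set (Fin m → ℕ)) :
    parikhImage (F.automaton E).accepts ⊆ E ∪ ⋃ i, F.linearSet i := by
  rintro _ ⟨w, hw, rfl⟩
  have htracks := F.tracks_eval E w
  rcases (DFA.mem_accepts _).1 hw with ⟨v, hv, hstate⟩ | ⟨i, t, hstate⟩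
  · rw [hstate] at htracks
    exact .inl (htracks.symm ▸ hv : parikh w ∈ E)
  · rw [hstate] at htracks
    exact .inr (Set.mem_iUnion_of_mem i htracks.mem_linearSet)

theorem step_of_ne {i : ι} {t : Option (Fin m)} {v : Fin m → ℕ} (hv : v ≠ F.goal i t)
    (c : Fin m) : F.step (some (i, t), v) c = (some (i, t), v + Pi.single c 1) :=
  if_neg hv

theorem step_goal (i : ι) (t : Option (Fin m)) (c : Fin m) :
    F.step (some (i, t), F.goal i t) c = (some (i, some c), Pi.single c 1) :=
  if_pos rfl

variable {E : Set (Fin m → ℕ)}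

theorem evalFrom_eq_goal {i : ι} {t : Option (Fin m)} {v : Fin m → ℕ} {u : List (Fin m)}
    (hu : v + parikh u = F.goal i t) :
    (F.automaton E).evalFrom (some (i, t), v) u = (some (i, t), F.goal i t) := by
  induction u generalizing v with
  | nil => rw [← hu]; rfl
  | cons c u ih =>
    have hne : v ≠ F.goal i t := fun h => by
      have := congrFun (h.trans hu.symm) c
      simp [parikh_cons] at this
    rw [parikh_cons, ← add_assoc] at hu
    rw [DFA.evalFrom_cons, ← ih hu]
    exact congrArg (DFA.evalFrom _ · u) (step_of_ne hne c)

theorem exists_evalFrom_goal (i : ι) (t : Option (Fin m)) {q : Fin m → ℕ}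
    (hq : q ∈ AddSubmonoid.closure (Set.range (F.period i))) :
    ∃ w t', parikh w = q ∧ (F.automaton E).evalFrom (some (i, t), F.goal i t) w =
      (some (i, t'), F.goal i t') := by
  induction hq using AddSubmonoid.closure_induction_right with
  | zero => exact ⟨[], t, rfl, rfl⟩
  | add_right q _ p hp ih =>
    obtain ⟨w, t', rfl, hw⟩ := ih
    obtain ⟨c, rfl⟩ := hp
    rcases F.period_eq_zero_or_pos i c with hc | hc
    · exact ⟨w, t', by rw [hc, add_zero], hw⟩
    obtain ⟨u, hu⟩ := exists_parikh_add_eq (u := Pi.single c 1) (v := F.period i c)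
      (update_le_iff.2 ⟨hc, fun _ _ => Nat.zero_le _⟩)
    refine ⟨w ++ c :: u, some c, by rw [parikh_append, parikh_cons, hu], ?_⟩
    rw [DFA.evalFrom_of_append, hw, DFA.evalFrom_cons, ← evalFrom_eq_goal (t := some c) hu]
    exact congrArg (DFA.evalFrom _ · u) (step_goal i t' c)

theorem step_none_of_forall_ne {v : Fin m → ℕ} {c : Fin m}
    (hv : ∀ i, ∀ a ≠ c, v ≠ Pi.single a (F.code i)) :
    F.step (none, v) c = (none, v + Pi.single c 1) :=
  dif_neg fun ⟨i, a, ha, h⟩ => hv i a ha h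

theorem step_none_single {i : ι} {a c : Fin m} (hac : a ≠ c) :
    F.step (none, Pi.single a (F.code i)) c =
      (some (i, none), Pi.single a (F.code i) + Pi.single c 1) := by
  have h : ∃ j, ∃ b ≠ c, Pi.single a (F.code i) = (Pi.single b (F.code j) : Fin m → ℕ) :=
    ⟨i, a, hac, rfl⟩
  obtain ⟨b, -, hb⟩ := h.choose_spec
  have hab : a = b := by
    by_contra hab
    have := congrFun hb a
    rw [Pi.single_eq_same, Pi.single_eq_of_ne hab] at this
    linarith [F.two_le_code i]
  subst hab
  have hchoose : h.choose = i := (F.code_injective (Pi.single_injective a hb)).symm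
  exact (dif_pos h).trans (by rw [hchoose])

theorem eval_replicate (a : Fin m) (n : ℕ) :
    (F.automaton E).eval (List.replicate n a) = (none, Pi.single a n) := by
  induction n with
  | zero => rw [Pi.single_zero]; rfl
  | succ n ih =>
    rw [List.replicate_succ', DFA.eval_append_singleton, ih, Pi.single_add]
    refine step_none_of_forall_ne fun i b hb h => ?_
    have := congrFun h b
    rw [Pi.single_eq_same, Pi.single_eq_of_ne hb] at this
    linarith [F.two_le_code i]

theorem evalFrom_none {a b : Fin m} (hab : a ≠ b) {v : Fin m → ℕ} (ha : 0 < v a) (hb : 0 < v b)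
    (u : List (Fin m)) : (F.automaton E).evalFrom (none, v) u = (none, v + parikh u) := by
  induction u generalizing v with
  | nil => rfl
  | cons c u ih =>
    have hstep : F.step (none, v) c = (none, v + Pi.single c 1) :=
      step_none_of_forall_ne fun i d _ h => by
        have hd (e : Fin m) (he : 0 < v e) : e = d := by
          by_contra hed
          rw [h, Pi.single_eq_of_ne hed] at he
          exact he.false
        exact hab ((hd a ha).trans (hd b hb).symm)
    rw [parikh_cons, ← add_assoc, ← ih (ha.trans_le le_self_add) (hb.trans_le le_self_add)]
    exact congrArg (DFA.evalFrom _ · u) hstep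

theorem exists_eval_none {a b : Fin m} (hab : a ≠ b) {v : Fin m → ℕ} (ha : 0 < v a)
    (hb : 0 < v b) : ∃ w, parikh w = v ∧ (F.automaton E).eval w = (none, v) := by
  obtain ⟨u, rfl⟩ := exists_parikh_add_eq (single_add_single_le hab ha hb)
  refine ⟨a :: b :: u, by rw [parikh_cons, parikh_cons, add_assoc], ?_⟩
  have hstep : F.step (none, Pi.single a 1) b = (none, Pi.single a 1 + Pi.single b 1) :=
    step_none_of_forall_ne fun i d _ h => by
      have hi := congrArg (∑ c, · c) h
      simp only [Finset.sum_pi_single', Finset.mem_univ, if_true] at hi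
      linarith [F.two_le_code i]
  calc (F.automaton E).eval (a :: b :: u)
      = (F.automaton E).evalFrom (F.step ((F.automaton E).eval (List.replicate 1 a)) b) u := rfl
    _ = (F.automaton E).evalFrom (none, Pi.single a 1 + Pi.single b 1) u := by
        rw [eval_replicate, hstep]
    _ = (none, Pi.single a 1 + Pi.single b 1 + parikh u) :=
        evalFrom_none hab (by simp) (by simp) u

theorem exists_eval_offset (i : ι) :
    ∃ w, parikh w = F.offset i ∧
      (F.automaton E).eval w = (some (i, none), F.goal i none) := by
  obtain ⟨a, b, hab, ha, hb⟩ := F.exists_letters i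
  obtain ⟨u, hu⟩ := exists_parikh_add_eq (single_add_single_le hab ha hb)
  refine ⟨List.replicate (F.code i) a ++ b :: u, ?_, ?_⟩
  · rw [parikh_append, parikh_cons, parikh_replicate, ← add_assoc, hu]
  · rw [DFA.eval, DFA.evalFrom_of_append, ← DFA.eval, eval_replicate, DFA.evalFrom_cons,
      ← evalFrom_eq_goal (t := none) hu]
    exact congrArg (DFA.evalFrom _ · u) (step_none_single hab)

theorem subset_parikhImage_automaton (hE : ∀ v ∈ E, ∃ a b, a ≠ b ∧ 0 < v a ∧ 0 < v b) :
    E ∪ ⋃ i, F.linearSet i ⊆ parikhImage (F.automaton E).accepts := by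
  rintro v (hv | hv)
  · obtain ⟨a, b, hab, ha, hb⟩ := hE v hv
    obtain ⟨w, hw, hw_eval⟩ := F.exists_eval_none (E := E) hab ha hb
    exact ⟨w, .inl ⟨v, hv, hw_eval⟩, hw⟩
  · obtain ⟨i, q, hq, rfl⟩ := Set.mem_iUnion.1 hv
    obtain ⟨u, hu, hu_eval⟩ := F.exists_eval_offset (E := E) i
    obtain ⟨w, t, rfl, hw⟩ := exists_evalFrom_goal (E := E) i none hq
    refine ⟨u ++ w, .inr ⟨i, t, ?_⟩, (parikh_append u w).trans (by rw [hu]; rfl)⟩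
    rw [← hw, ← hu_eval]
    exact DFA.evalFrom_of_append _ _ _ _

theorem parikhImage_automaton (hE : ∀ v ∈ E, ∃ a b, a ≠ b ∧ 0 < v a ∧ 0 < v b) :
    parikhImage (F.automaton E).accepts = E ∪ ⋃ i, F.linearSet i :=
  (parikhImage_automaton_subset E).antisymm (subset_parikhImage_automaton hE)

variable [Fintype ι]

/-- The states of the infinite automaton in which the entries of the collected vector are at most
`B`. -/
def boundedStates (m : ℕ) (ι : Type*) [Fintype ι] (B : ℕ) : Finset (State m ι) :=
  Finset.univ ×ˢ Finset.Iic fun _ => B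

theorem mem_boundedStates {B : ℕ} {s : State m ι} :
    s ∈ boundedStates m ι B ↔ ∀ a, s.2 a ≤ B := by
  simp only [boundedStates, Finset.mem_product, Finset.mem_univ, true_and, Finset.mem_Iic,
    Pi.le_def]

theorem card_boundedStates (m : ℕ) (ι : Type*) [Fintype ι] (B : ℕ) :
    (boundedStates m ι B).card = (Fintype.card ι * (m + 1) + 1) * (B + 1) ^ m := by
  simp [boundedStates, Pi.card_Iic]

theorem parikhImage_truncate_automaton {B : ℕ} (hoffset : ∀ i a, F.offset i a ≤ B)
    (hperiod : ∀ i c a, F.period i c a ≤ B) (hEB : ∀ v ∈ E, ∀ a, v a ≤ B)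
    (hE : ∀ v ∈ E, ∃ a b, a ≠ b ∧ 0 < v a ∧ 0 < v b) :
    parikhImage (truncate (F.automaton E) (boundedStates m ι B)).accepts =
      E ∪ ⋃ i, F.linearSet i := by
  have hgoal (i : ι) (t : Option (Fin m)) (a : Fin m) : F.goal i t a ≤ B := by
    cases t with
    | none => exact hoffset i a
    | some c => exact hperiod i c a
  rw [accepts_truncate, parikhImage_automaton hE]
  · intro s c hs
    rw [mem_boundedStates] at hs ⊢
    obtain ⟨_ | ⟨i, t⟩, v⟩ := s
    · refine fun a => le_trans ?_ (hs a)
      simp only [automaton, CodedLinearFamily.step]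
      split_ifs <;> exact le_self_add
    · by_cases hv : v = F.goal i t
      · exact hv ▸ hgoal i t
      · refine fun a => le_trans ?_ (hs a)
        exact le_self_add.trans_eq (congrFun (congrArg Prod.snd (step_of_ne hv c)) a).symm
  · rintro _ (⟨v, hv, rfl⟩ | ⟨i, t, rfl⟩)
    · exact mem_boundedStates.2 (hEB v hv)
    · exact mem_boundedStates.2 (hgoal i t)

end CodedLinearFamily

section NonunarySets

variable {m : ℕ}

open Classical in
/-- The triples `(o, Q, j)` with entries at most `N` such that the linear set with offset `o` and
letter-indexed periods `Q` lies in `Z` and the period `Q j` is nonzero. -/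
noncomputable def linearPieces (Z : Set (Fin m → ℕ)) (N : ℕ) :
    Finset ((Fin m → ℕ) × (Fin m → Fin m → ℕ) × Fin m) :=
  {d ∈ Finset.Iic (fun _ => N) ×ˢ Finset.Iic (fun _ _ => N) ×ˢ Finset.univ |
    (∀ a, d.2.1 a = 0 ∨ 0 < d.2.1 a a) ∧ 0 < d.2.1 d.2.2 d.2.2 ∧ letterLinearSet d.1 d.2.1 ⊆ Z}

theorem mem_linearPieces {Z : Set (Fin m → ℕ)} {N : ℕ} {o : Fin m → ℕ} {Q : Fin m → Fin m → ℕ}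
    {j : Fin m} : (o, Q, j) ∈ linearPieces Z N ↔ (∀ a, o a ≤ N) ∧ (∀ a b, Q a b ≤ N) ∧
      (∀ a, Q a = 0 ∨ 0 < Q a a) ∧ 0 < Q j j ∧ letterLinearSet o Q ⊆ Z := by
  simp only [linearPieces, Finset.mem_filter, Finset.mem_product, Finset.mem_Iic, Finset.mem_univ,
    and_true, Pi.le_def, and_assoc]

/-- A bound on the number of triples in `linearPieces Z N`. -/
def pieceBound (m N : ℕ) : ℕ :=
  (N + 1) ^ m * (((N + 1) ^ m) ^ m * m)

theorem card_linearPieces_le (Z : Set (Fin m → ℕ)) (N : ℕ) :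
    (linearPieces Z N).card ≤ pieceBound m N := by
  classical
  refine (Finset.card_filter_le _ _).trans_eq ?_
  simp [Pi.card_Iic, pieceBound]

/-- The family of the linear sets `o + (K + 2) • Q j + ⟨Q⟩` for `(o, Q, j) ∈ linearPieces Z N`,
where `K` is the number of such triples; the multiple of `Q j` provides room for the code. -/
noncomputable def codedPieces (Z : Set (Fin m → ℕ)) (N : ℕ)
    (hZ : ∀ v ∈ Z, ∃ a b, a ≠ b ∧ 0 < v a ∧ 0 < v b) :
    CodedLinearFamily m (linearPieces Z N) where
  offset d := d.1.1 + ((linearPieces Z N).card + 2) • d.1.2.1 d.1.2.2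
  period d := d.1.2.1
  code d := (linearPieces Z N).equivFin d + 2
  code_injective _ _ h :=
    (linearPieces Z N).equivFin.injective (Fin.ext (Nat.add_right_cancel h))
  two_le_code _ := Nat.le_add_left _ _
  exists_letters := by
    rintro ⟨⟨o, Q, j⟩, hd⟩
    obtain ⟨-, -, -, hj, hsub⟩ := mem_linearPieces.1 hd
    obtain ⟨b, hbj, hb⟩ : ∃ b, b ≠ j ∧ 0 < o b := by
      obtain ⟨a, b, hab, ha, hb⟩ := hZ o (hsub ⟨0, zero_mem _, add_zero o⟩)
      rcases eq_or_ne a j with rfl | haj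
      · exact ⟨b, hab.symm, hb⟩
      · exact ⟨a, haj, ha⟩
    refine ⟨j, b, hbj.symm, ?_, hb.trans_le (Nat.le_add_right _ _)⟩
    calc ((linearPieces Z N).equivFin ⟨(o, Q, j), hd⟩ : ℕ) + 2
        ≤ (linearPieces Z N).card + 2 := Nat.add_le_add_right (Fin.is_lt _).le 2
      _ ≤ ((linearPieces Z N).card + 2) * Q j j := Nat.le_mul_of_pos_right _ hj
      _ ≤ o j + ((linearPieces Z N).card + 2) * Q j j := Nat.le_add_left _ _
  period_eq_zero_or_pos := by
    rintro ⟨⟨o, Q, j⟩, hd⟩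
    exact (mem_linearPieces.1 hd).2.2.1

theorem add_sum_mem_letterLinearSet {α : Type*} [Fintype α] {o : α → ℕ} {Q : α → α → ℕ}
    {k : α → ℕ} {j : α} {t : ℕ} (ht : t ≤ k j) :
    o + ∑ a, k a • Q a ∈ letterLinearSet (o + t • Q j) Q := by
  classical
  have hle : Pi.single j t ≤ k := update_le_iff.2 ⟨ht, fun _ _ => Nat.zero_le _⟩
  obtain ⟨r, rfl⟩ := exists_add_of_le hle
  refine ⟨∑ a, r a • Q a, sum_mem fun a _ => nsmul_mem
    (AddSubmonoid.subset_closure (Set.mem_range_self a)) _, ?_⟩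
  simp only [vadd_eq_add, ← Fintype.linearCombination_apply ℕ, map_add,
    Fintype.linearCombination_apply_single, add_assoc]

/-- The vectors in `Z` with entries at most `B`. -/
def smallVectors (Z : Set (Fin m → ℕ)) (B : ℕ) : Set (Fin m → ℕ) :=
  {v ∈ Z | ∀ a, v a ≤ B}

theorem smallVectors_union_codedPieces {Z : Set (Fin m → ℕ)} {N B : ℕ}
    (hB : N + m * (((linearPieces Z N).card + 2) * N) ≤ B) (hZN : IsLetterLinearUnion N Z)
    (hZ : ∀ v ∈ Z, ∃ a b, a ≠ b ∧ 0 < v a ∧ 0 < v b) :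
    smallVectors Z B ∪ ⋃ d, (codedPieces Z N hZ).linearSet d = Z := by
  refine (Set.union_subset (Set.sep_subset _ _) (Set.iUnion_subset ?_)).antisymm fun z hz => ?_
  · rintro ⟨⟨o, Q, j⟩, hd⟩ _ ⟨q, hq, rfl⟩
    refine (mem_linearPieces.1 hd).2.2.2.2 ⟨_, add_mem (nsmul_mem (AddSubmonoid.subset_closure
      (Set.mem_range_self j)) ((linearPieces Z N).card + 2)) hq, (add_assoc _ _ _).symm⟩
  · obtain ⟨o, Q, ho, hQ, hQpos, ⟨q, hq, rfl⟩, hsub⟩ := hZN z hz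
    obtain ⟨k, rfl⟩ := AddSubmonoid.exists_of_mem_closure_range _ _ hq
    by_cases hk : ∃ j, 0 < Q j j ∧ (linearPieces Z N).card + 2 ≤ k j
    · obtain ⟨j, hj, hkj⟩ := hk
      exact .inr (Set.mem_iUnion_of_mem ⟨(o, Q, j), mem_linearPieces.2 ⟨ho, hQ, hQpos, hj, hsub⟩⟩
        (add_sum_mem_letterLinearSet hkj))
    · refine .inl ⟨hz, fun b => le_trans (add_le_add (ho b) ?_) hB⟩
      rw [Finset.sum_apply]
      refine (Finset.sum_le_card_nsmul _ _ _ fun a _ => ?_).trans_eq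
        (by rw [Finset.card_univ, Fintype.card_fin, smul_eq_mul])
      rcases hQpos a with ha | ha
      · simp [ha]
      · exact Nat.mul_le_mul (by grind) (hQ a b)

/-- A bound on the entries of the offsets and periods in `codedPieces Z N`, and on those of the
vectors of `Z` that are not covered by this family. -/
def entryBound (m N : ℕ) : ℕ :=
  N + m * ((pieceBound m N + 2) * N)

theorem codedPieces_offset_le {Z : Set (Fin m → ℕ)} {N : ℕ}
    (hZ : ∀ v ∈ Z, ∃ a b, a ≠ b ∧ 0 < v a ∧ 0 < v b) (d : linearPieces Z N) (a : Fin m) :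
    (codedPieces Z N hZ).offset d a ≤ entryBound m N := by
  obtain ⟨⟨o, Q, j⟩, hd⟩ := d
  obtain ⟨ho, hQ, -⟩ := mem_linearPieces.1 hd
  calc o a + ((linearPieces Z N).card + 2) * Q j a
      ≤ N + (pieceBound m N + 2) * N := by
        gcongr
        exacts [ho a, card_linearPieces_le Z N, hQ j a]
    _ ≤ entryBound m N := Nat.add_le_add_left (Nat.le_mul_of_pos_left _ j.pos) N

theorem codedPieces_period_le {Z : Set (Fin m → ℕ)} {N : ℕ}
    (hZ : ∀ v ∈ Z, ∃ a b, a ≠ b ∧ 0 < v a ∧ 0 < v b) (d : linearPieces Z N) (c a : Fin m) :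
    (codedPieces Z N hZ).period d c a ≤ entryBound m N :=
  ((mem_linearPieces.1 d.2).2.1 c a).trans (Nat.le_add_right _ _)

/-- A bound on the number of states of a deterministic automaton that is Parikh equivalent to a
nonunary union of letter-indexed linear sets with entries at most `N`. -/
def stateBound (m N : ℕ) : ℕ :=
  (pieceBound m N * (m + 1) + 1) * (entryBound m N + 1) ^ m + 1

theorem IsLetterLinearUnion.exists_dfa {Z : Set (Fin m → ℕ)} {N : ℕ}
    (hZN : IsLetterLinearUnion N Z) (hZ : ∀ v ∈ Z, ∃ a b, a ≠ b ∧ 0 < v a ∧ 0 < v b) :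
    ∃ (σ : Type) (_ : Fintype σ) (M : DFA (Fin m) σ),
      Fintype.card σ ≤ stateBound m N ∧ parikhImage M.accepts = Z := by
  refine ⟨_, inferInstance, truncate ((codedPieces Z N hZ).automaton
    (smallVectors Z (entryBound m N))) (CodedLinearFamily.boundedStates m _ (entryBound m N)),
    ?_, ?_⟩
  · rw [Fintype.card_option, Fintype.card_coe, CodedLinearFamily.card_boundedStates,
      Fintype.card_coe]
    unfold stateBound
    gcongr
    exact card_linearPieces_le Z N
  · rw [CodedLinearFamily.parikhImage_truncate_automaton (codedPieces_offset_le hZ)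
      (codedPieces_period_le hZ) (fun v hv => hv.2) (fun v hv => hZ v hv.1)]
    refine smallVectors_union_codedPieces ?_ hZN hZ
    unfold entryBound
    gcongr
    exact card_linearPieces_le Z N

end NonunarySets

section Bounds

/-- `f h` is at most `2 ^ (C * h)` for `h ≥ 1` and a positive constant `C`. -/
def ExponentiallyBounded (f : ℕ → ℕ) : Prop :=
  ∃ C, 0 < C ∧ ∀ h, 1 ≤ h → f h ≤ 2 ^ (C * h)

namespace ExponentiallyBounded

theorem two_pow : ExponentiallyBounded (2 ^ ·) :=
  ⟨1, one_pos, fun h _ => by rw [one_mul]⟩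

theorem of_le {f g : ℕ → ℕ} (hg : ExponentiallyBounded g) (hfg : ∀ h, f h ≤ g h) :
    ExponentiallyBounded f :=
  hg.imp fun _ hC => ⟨hC.1, fun h hh => (hfg h).trans (hC.2 h hh)⟩

theorem id : ExponentiallyBounded fun h => h :=
  two_pow.of_le fun _ => Nat.lt_two_pow_self.le

theorem const (c : ℕ) : ExponentiallyBounded fun _ => c :=
  ⟨c + 1, Nat.succ_pos c, fun h hh => Nat.lt_two_pow_self.le.trans
    (Nat.pow_le_pow_right two_pos (by nlinarith))⟩

variable {f g : ℕ → ℕ}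

theorem add_one (hf : ExponentiallyBounded f) : ExponentiallyBounded fun h => f h + 1 := by
  obtain ⟨C, -, hf⟩ := hf
  refine ⟨C + 1, Nat.succ_pos C, fun h hh => ?_⟩
  calc f h + 1 ≤ 2 ^ (C * h) + 2 ^ (C * h) := add_le_add (hf h hh) Nat.one_le_two_pow
    _ = 2 ^ (C * h + 1) := by rw [pow_succ, mul_two]
    _ ≤ 2 ^ ((C + 1) * h) := Nat.pow_le_pow_right two_pos (by rw [add_mul, one_mul]; gcongr)

theorem mul (hf : ExponentiallyBounded f) (hg : ExponentiallyBounded g) :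
    ExponentiallyBounded fun h => f h * g h := by
  obtain ⟨C, hC, hf⟩ := hf
  obtain ⟨D, -, hg⟩ := hg
  refine ⟨C + D, Nat.add_pos_left hC D, fun h hh => ?_⟩
  rw [add_mul, pow_add]
  exact Nat.mul_le_mul (hf h hh) (hg h hh)

theorem add (hf : ExponentiallyBounded f) (hg : ExponentiallyBounded g) :
    ExponentiallyBounded fun h => f h + g h :=
  ((hf.add_one).mul (hg.add_one)).of_le fun h => by nlinarith

theorem pow (hf : ExponentiallyBounded f) (n : ℕ) : ExponentiallyBounded fun h => f h ^ n := by
  induction n with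
  | zero => exact const 1
  | succ n ih => exact ih.mul hf

variable (m : ℕ)

theorem offsetBound (hf : ExponentiallyBounded f) :
    ExponentiallyBounded fun h => offsetBound m (f h) :=
  (hf.add_one.pow m).mul ((((hf.add_one.pow m).mul hf).add_one.pow m).mul hf)

theorem pieceBound (hf : ExponentiallyBounded f) :
    ExponentiallyBounded fun h => pieceBound m (f h) :=
  (hf.add_one.pow m).mul (((hf.add_one.pow m).pow m).mul (const m))

theorem entryBound (hf : ExponentiallyBounded f) :
    ExponentiallyBounded fun h => entryBound m (f h) :=
  hf.add ((const m).mul (((hf.pieceBound m).add (const 2)).mul hf))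

theorem stateBound (hf : ExponentiallyBounded f) :
    ExponentiallyBounded fun h => stateBound m (f h) :=
  ((((hf.pieceBound m).mul (const (m + 1))).add_one).mul ((hf.entryBound m).add_one.pow m)).add_one

end ExponentiallyBounded

end Bounds

/-- For every `m ≥ 1` there is a constant `C > 0` such that every CFG in
Chomsky normal form with `h ≥ 1` variables over a terminal alphabet of `m` letters
generating no unary word admits a Parikh equivalent DFA with at most `2^{C·h}` states. -/
theorem cnf_to_parikh_equivalent_dfa_nonunary (m : ℕ) (hm : 1 ≤ m) :
    ∃ C : ℕ, 0 < C ∧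
      ∀ h : ℕ, 1 ≤ h →
      ∀ G : ContextFreeGrammar (Fin m), IsCNF G →
      ∀ fG : Fintype G.NT, @Fintype.card G.NT fG = h →
      (∀ w ∈ G.language, ¬ IsUnaryWord w) →
      ∃ (σ : Type) (_ : Fintype σ) (B : DFA (Fin m) σ),
        Fintype.card σ ≤ 2 ^ (C * h) ∧
        parikhImage B.accepts = parikhImage G.language := by
  have hN : ExponentiallyBounded fun h => (h + 1) * 2 ^ (h + 1) :=
    ExponentiallyBounded.id.add_one.mul
      ((ExponentiallyBounded.const 2).mul .two_pow |>.of_le fun h => (pow_succ' 2 h).le)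
  obtain ⟨C, hC, hbound⟩ := (hN.add (hN.offsetBound m)).stateBound m
  refine ⟨C, hC, fun h hh G hG _ hcard hunary => ?_⟩
  have hnil : [] ∉ G.language := fun hnil => hunary [] hnil (by simp [IsUnaryWord])
  have hpos : ∀ v ∈ parikhImage G.language, ∃ a b, a ≠ b ∧ 0 < v a ∧ 0 < v b := by
    rintro _ ⟨w, hw, rfl⟩
    exact exists_pos_of_not_isUnaryWord (hunary w hw)
  have hlinear : IsSemilinearLE ((h + 1) * 2 ^ (h + 1)) (parikhImage G.language) := by
    rw [hG.parikhImage_language hnil, ← hcard, ← Nat.card_eq_fintype_card]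
    exact isSemilinearLE_derivationTree G.initial
  have hunion := hlinear.isLetterLinearUnion
  rw [Fintype.card_fin] at hunion
  obtain ⟨σ, _, B, hσ, hB⟩ := hunion.exists_dfa hpos
  exact ⟨σ, inferInstance, B, hσ.trans (hbound h hh), hB⟩
end

section
/- For every m ≥ 1 there exists a constant C > 0 such that for every h ≥ 1 and every context-free grammar in Chomsky normal form with h variables over a terminal alphabet Σ of m letters, there exists a deterministic finite automaton over Σ with at most 2^{C·h²} states that is Parikh equivalent to the grammar. -/
/-!
Cutting pumps out of derivation trees writes the Parikh image of the grammar as a union of linear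
sets with bases of degree `2 ^ O(h ^ 2)` and periods of degree `2 ^ O(h)`. By a pigeonhole argument
on subset sums, `O(h)` periods suffice for any given vector. Replacing these periods by multiples of
one common degree `L = 2 ^ O(h ^ 2)` only enlarges the base, and from then on an automaton can read
the periods as blocks of length `L`, which it compares with the admissible periods and forgets.

Recording the periods in the states of disjoint automata would not be deterministic. Instead, a
deterministic automaton learns which set of periods to use from the word itself: a long vector
has a large coordinate `j`, and since only the letter counts matter, the word may be arranged to
begin with `k + 1` copies of `j` followed by another letter, where `k` is the index of the set of
periods. There are only `2 ^ O(h ^ 2)` such sets, so the prefix that has to be remembered is short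
enough. The vectors supported on a single letter `j` admit no such code, but for them a common
multiple of the degrees of one pump `j ^ a` per variable serves as a single period.
-/

namespace ParikhDFA

section Degree

variable {ι : Type*} [Fintype ι]

/-- The sum of the entries of a vector `v : ι → ℕ`; the degree of a Parikh vector is the length of
the words it represents. -/
def degree : (ι → ℕ) →+ ℕ where
  toFun v := ∑ i, v i
  map_zero' := by simp
  map_add' v w := by simp [Finset.sum_add_distrib]

theorem degree_apply (v : ι → ℕ) : degree v = ∑ i, v i := rfl

@[simp]
theorem degree_single [DecidableEq ι] (i : ι) (k : ℕ) : degree (Pi.single i k) = k := by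
  simp [degree_apply]

theorem apply_le_degree (v : ι → ℕ) (i : ι) : v i ≤ degree v :=
  Finset.single_le_sum_of_canonicallyOrdered (Finset.mem_univ i)

@[gcongr]
theorem degree_mono {v w : ι → ℕ} (h : v ≤ w) : degree v ≤ degree w :=
  Finset.sum_le_sum fun i _ ↦ h i

@[simp]
theorem degree_eq_zero {v : ι → ℕ} : degree v = 0 ↔ v = 0 := by
  simp [degree_apply, funext_iff]

theorem degree_pos {v : ι → ℕ} : 0 < degree v ↔ v ≠ 0 := by
  simp [Nat.pos_iff_ne_zero]

/-- The vectors of degree at most `n`. -/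
def degreeLE (ι : Type*) [Fintype ι] [DecidableEq ι] (n : ℕ) : Finset (ι → ℕ) :=
  {v ∈ Fintype.piFinset fun _ ↦ Finset.range (n + 1) | degree v ≤ n}

@[simp]
theorem mem_degreeLE [DecidableEq ι] {n : ℕ} {v : ι → ℕ} : v ∈ degreeLE ι n ↔ degree v ≤ n := by
  simp only [degreeLE, Finset.mem_filter, Fintype.mem_piFinset, Finset.mem_range_succ_iff,
    and_iff_right_iff_imp]
  exact fun h i ↦ (apply_le_degree v i).trans h

theorem card_degreeLE_le [DecidableEq ι] (n : ℕ) :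
    (degreeLE ι n).card ≤ (n + 1) ^ Fintype.card ι := by
  refine (Finset.card_filter_le _ _).trans_eq ?_
  simp

end Degree

section LinearCover

variable {ι : Type*} [Fintype ι]

/-- The vector `v` belongs to a linear set `b + ⟨P⟩` contained in `S` whose base `b` has degree at
most `B`. -/
def HasLinearCover (S P : Set (ι → ℕ)) (B : ℕ) (v : ι → ℕ) : Prop :=
  ∃ b, degree b ≤ B ∧ (∃ x ∈ AddSubmonoid.closure P, v = b + x) ∧
    ∀ x ∈ AddSubmonoid.closure P, b + x ∈ S

theorem HasLinearCover.mono {S P : Set (ι → ℕ)} {B B' : ℕ} {v : ι → ℕ}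
    (h : HasLinearCover S P B v) (hB : B ≤ B') : HasLinearCover S P B' v :=
  let ⟨b, hb, hcover⟩ := h
  ⟨b, hb.trans hB, hcover⟩

end LinearCover

section Caratheodory

theorem sum_nsmul_mem_closure {M : Type*} [AddCommMonoid M] {s : Set M}
    {F : Finset M} {f : M → ℕ} (h : ∀ β ∈ F, f β • β ≠ 0 → β ∈ s) :
    ∑ β ∈ F, f β • β ∈ AddSubmonoid.closure s := by
  refine sum_mem fun β hβ ↦ ?_
  by_cases hf : f β • β = 0
  · exact hf ▸ zero_mem _
  · exact nsmul_mem (AddSubmonoid.subset_closure (h β hβ hf)) _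

theorem mem_closure_nonzero_le {ι : Type*} {Q : Set (ι → ℕ)} {x : ι → ℕ}
    (hx : x ∈ AddSubmonoid.closure Q) :
    x ∈ AddSubmonoid.closure {β ∈ Q | β ≠ 0 ∧ β ≤ x} := by
  obtain ⟨f, F, hFQ, -, rfl⟩ := AddSubmonoid.mem_closure_iff_exists_finset_subset.mp hx
  refine sum_nsmul_mem_closure fun β hβ hfβ ↦ ?_
  refine ⟨hFQ hβ, right_ne_zero_of_smul hfβ, ?_⟩
  have hpos : 1 ≤ f β := Nat.one_le_iff_ne_zero.mpr (left_ne_zero_of_smul hfβ)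
  calc β = 1 • β := (one_nsmul β).symm
    _ ≤ f β • β := nsmul_le_nsmul_left zero_le hpos
    _ ≤ ∑ γ ∈ F, f γ • γ := Finset.single_le_sum_of_canonicallyOrdered (f := fun γ ↦ f γ • γ) hβ

theorem exists_mem_closure_erase_of_sum_eq_sum {M : Type*} [AddCommMonoid M] [DecidableEq M]
    {F I J : Finset M} (hI : I ⊆ F) (hJ : J ⊆ F) (hIJ : Disjoint I J) (hne : I.Nonempty)
    (hsum : ∑ β ∈ I, β = ∑ β ∈ J, β) {x : M} (hx : x ∈ AddSubmonoid.closure (F : Set M)) :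
    ∃ β ∈ F, x ∈ AddSubmonoid.closure (F.erase β : Set M) := by
  obtain ⟨f, -, rfl⟩ := AddSubmonoid.mem_closure_finset.mp hx
  -- replacing `f γ` copies of `∑ I` by as many copies of `∑ J` makes the coefficient of `γ` vanish
  obtain ⟨γ, hγ, hmin⟩ := I.exists_min_image f hne
  have hsplit : ∑ β ∈ F, f β • β =
      ∑ β ∈ F \ I, f β • β + (∑ β ∈ I, (f β - f γ) • β + ∑ β ∈ J, f γ • β) := by
    rw [← Finset.sum_sdiff hI, ← Finset.smul_sum, ← hsum, Finset.smul_sum,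
      ← Finset.sum_add_distrib]
    congr 1
    refine Finset.sum_congr rfl fun β hβ ↦ ?_
    rw [← add_nsmul, Nat.sub_add_cancel (hmin β hβ)]
  refine ⟨γ, hI hγ, ?_⟩
  rw [hsplit]
  refine add_mem (sum_nsmul_mem_closure fun β hβ _ ↦ ?_)
    (add_mem (sum_nsmul_mem_closure fun β hβ hne ↦ ?_)
      (sum_nsmul_mem_closure fun β hβ _ ↦ ?_))
  · grind
  · refine Finset.mem_coe.mpr (Finset.mem_erase.mpr ⟨?_, hI hβ⟩)
    rintro rfl
    simp at hne
  · have := Finset.disjoint_left.mp hIJ hγ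
    grind

variable {ι : Type*} [Fintype ι]

theorem exists_mem_closure_erase_of_card_lt [DecidableEq (ι → ℕ)] {D R : ℕ}
    (hR : (R * D + 1) ^ Fintype.card ι < 2 ^ R) {F : Finset (ι → ℕ)} (hF : R < F.card)
    (hdeg : ∀ β ∈ F, degree β ≤ D) {x : ι → ℕ}
    (hx : x ∈ AddSubmonoid.closure (F : Set (ι → ℕ))) :
    ∃ β ∈ F, x ∈ AddSubmonoid.closure (F.erase β : Set (ι → ℕ)) := by
  classical
  obtain ⟨F₀, hF₀, hcard⟩ := Finset.exists_subset_card_eq hF.le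
  have hmaps : Set.MapsTo (fun I : Finset (ι → ℕ) ↦ ∑ β ∈ I, β) F₀.powerset
      (degreeLE ι (R * D)) := by
    intro I hI
    rw [Finset.mem_coe, Finset.mem_powerset] at hI
    rw [Finset.mem_coe, mem_degreeLE]
    calc degree (∑ β ∈ I, β) = ∑ β ∈ I, degree β := map_sum degree _ _
      _ ≤ I.card * D := Finset.sum_le_card_nsmul _ _ _ fun β hβ ↦ hdeg β (hF₀ (hI hβ))
      _ ≤ R * D := Nat.mul_le_mul_right D (hcard ▸ Finset.card_le_card hI)
  have hlt : (degreeLE ι (R * D)).card < F₀.powerset.card := by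
    rw [Finset.card_powerset, hcard]
    exact (card_degreeLE_le _).trans_lt hR
  obtain ⟨I, hI, J, hJ, hne, hsum⟩ := Finset.exists_ne_map_eq_of_card_lt_of_maps_to hlt hmaps
  have hIF : I \ J ⊆ F := Finset.sdiff_subset.trans ((Finset.mem_powerset.mp hI).trans hF₀)
  have hJF : J \ I ⊆ F := Finset.sdiff_subset.trans ((Finset.mem_powerset.mp hJ).trans hF₀)
  have hsum' := Finset.sum_sdiff_eq_sum_sdiff_iff.mpr hsum
  rcases (I \ J).eq_empty_or_nonempty with hIJ | hIJ
  · have hJI : (J \ I).Nonempty := Finset.sdiff_nonempty.mpr fun hJI ↦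
      hne ((Finset.sdiff_eq_empty_iff_subset.mp hIJ).antisymm hJI)
    exact exists_mem_closure_erase_of_sum_eq_sum hJF hIF disjoint_sdiff_sdiff hJI hsum'.symm hx
  · exact exists_mem_closure_erase_of_sum_eq_sum hIF hJF disjoint_sdiff_sdiff hIJ hsum' hx

theorem exists_finset_card_le_mem_closure {Q : Set (ι → ℕ)} {D R : ℕ}
    (hQ : ∀ β ∈ Q, degree β ≤ D) (hR : (R * D + 1) ^ Fintype.card ι < 2 ^ R) {x : ι → ℕ}
    (hx : x ∈ AddSubmonoid.closure Q) :
    ∃ F : Finset (ι → ℕ), ↑F ⊆ Q ∧ F.card ≤ R ∧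
      x ∈ AddSubmonoid.closure (F : Set (ι → ℕ)) := by
  classical
  obtain ⟨f, F, hFQ, -, hf⟩ := AddSubmonoid.mem_closure_iff_exists_finset_subset.mp hx
  replace hx : x ∈ AddSubmonoid.closure (F : Set (ι → ℕ)) :=
    hf ▸ sum_nsmul_mem_closure fun β hβ _ ↦ hβ
  clear hf
  induction F using Finset.strongInduction with
  | H F ih =>
    by_cases hcard : F.card ≤ R
    · exact ⟨F, hFQ, hcard, hx⟩
    obtain ⟨β, hβ, hx'⟩ := exists_mem_closure_erase_of_card_lt hR (not_le.mp hcard)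
      (fun β hβ ↦ hQ β (hFQ hβ)) hx
    exact ih _ (Finset.erase_ssubset hβ)
      ((Finset.coe_subset.mpr (Finset.erase_subset β F)).trans hFQ) hx'

end Caratheodory

section Periods

variable {ι : Type*} [Fintype ι]

theorem exists_remainder {F : Finset (ι → ℕ)} {k : (ι → ℕ) → ℕ} {M : ℕ}
    (hk : ∀ β ∈ F, 0 < k β ∧ k β * degree β ≤ M) {x : ι → ℕ}
    (hx : x ∈ AddSubmonoid.closure (F : Set (ι → ℕ))) :
    ∃ y ∈ AddSubmonoid.closure (F : Set (ι → ℕ)), degree y ≤ F.card * M ∧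
      ∃ z ∈ AddSubmonoid.closure ((fun β ↦ k β • β) '' F), x = y + z := by
  obtain ⟨f, -, rfl⟩ := AddSubmonoid.mem_closure_finset.mp hx
  refine ⟨∑ β ∈ F, (f β % k β) • β, sum_nsmul_mem_closure fun β hβ _ ↦ hβ, ?_,
    ∑ β ∈ F, (f β / k β) • k β • β, sum_mem fun β hβ ↦ ?_, ?_⟩
  · rw [map_sum, ← smul_eq_mul]
    refine Finset.sum_le_card_nsmul _ _ _ fun β hβ ↦ ?_
    rw [map_nsmul, smul_eq_mul]
    exact (Nat.mul_le_mul_right _ (Nat.mod_lt _ (hk β hβ).1).le).trans (hk β hβ).2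
  · exact nsmul_mem (AddSubmonoid.subset_closure (Set.mem_image_of_mem _ hβ)) _
  · rw [← Finset.sum_add_distrib]
    refine Finset.sum_congr rfl fun β _ ↦ ?_
    rw [smul_smul, ← add_nsmul, Nat.mod_add_div']

theorem HasLinearCover.exists_finset_forall_scale {S Q : Set (ι → ℕ)} {B D R : ℕ} {v : ι → ℕ}
    (h : HasLinearCover S Q B v) (hQ : ∀ β ∈ Q, degree β ≤ D)
    (hR : (R * D + 1) ^ Fintype.card ι < 2 ^ R) :
    ∃ F : Finset (ι → ℕ), F.card ≤ R ∧ (∀ β ∈ F, β ∈ Q ∧ β ≠ 0 ∧ β ≤ v) ∧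
      (F = ∅ → degree v ≤ B) ∧
      ∀ (P : Set (ι → ℕ)) (M : ℕ) (k : (ι → ℕ) → ℕ), P ⊆ AddSubmonoid.closure Q →
        (∀ β ∈ F, 0 < k β ∧ k β * degree β ≤ M ∧ k β • β ∈ AddSubmonoid.closure P) →
        HasLinearCover S P (B + R * M) v := by
  obtain ⟨b, hb, ⟨x, hx, rfl⟩, hS⟩ := h
  obtain ⟨F, hFQ, hcard, hxF⟩ := exists_finset_card_le_mem_closure
    (Q := {β ∈ Q | β ≠ 0 ∧ β ≤ x}) (fun β hβ ↦ hQ β hβ.1) hR (mem_closure_nonzero_le hx)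
  have hFle : AddSubmonoid.closure (F : Set (ι → ℕ)) ≤ AddSubmonoid.closure Q :=
    AddSubmonoid.closure_mono fun β hβ ↦ (hFQ hβ).1
  refine ⟨F, hcard, fun β hβ ↦ ⟨(hFQ hβ).1, (hFQ hβ).2.1, (hFQ hβ).2.2.trans le_add_self⟩, ?_, ?_⟩
  · rintro rfl
    obtain rfl : x = 0 := by simpa using hxF
    simpa using hb
  · intro P M k hPQ hk
    obtain ⟨y, hy, hdeg, z, hz, rfl⟩ :=
      exists_remainder (fun β hβ ↦ ⟨(hk β hβ).1, (hk β hβ).2.1⟩) hxF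
    refine ⟨b + y, ?_, ⟨z, ?_, (add_assoc _ _ _).symm⟩, fun w hw ↦ ?_⟩
    · rw [map_add]
      exact add_le_add hb (hdeg.trans (Nat.mul_le_mul_right M hcard))
    · refine AddSubmonoid.closure_le.mpr ?_ hz
      rintro _ ⟨β, hβ, rfl⟩
      exact (hk β hβ).2.2
    · rw [add_assoc]
      exact hS _ (add_mem (hFle hy) (AddSubmonoid.closure_le.mpr hPQ hw))

open Classical in
/-- The multiples of the vectors in `F` whose degree is the product of the degrees of the vectors
in `F`. -/
def homogenization (F : Finset (ι → ℕ)) : Set (ι → ℕ) :=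
  (fun β ↦ (∏ γ ∈ F.erase β, degree γ) • β) '' F

theorem degree_of_mem_homogenization {F : Finset (ι → ℕ)} {β : ι → ℕ}
    (hβ : β ∈ homogenization F) : degree β = ∏ γ ∈ F, degree γ := by
  classical
  obtain ⟨γ, hγ, rfl⟩ := hβ
  rw [map_nsmul, smul_eq_mul, Finset.prod_erase_mul _ _ hγ]

theorem HasLinearCover.exists_homogenization {S Q : Set (ι → ℕ)} {B D R : ℕ} {v : ι → ℕ}
    (h : HasLinearCover S Q B v) (hD : 1 ≤ D) (hQ : ∀ β ∈ Q, degree β ≤ D)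
    (hR : (R * D + 1) ^ Fintype.card ι < 2 ^ R) :
    ∃ F : Finset (ι → ℕ), F.card ≤ R ∧ (∀ β ∈ F, β ∈ Q ∧ β ≠ 0) ∧
      HasLinearCover S (homogenization F) (B + R * D ^ R) v := by
  classical
  obtain ⟨F, hcard, hF, -, hcover⟩ := h.exists_finset_forall_scale hQ hR
  refine ⟨F, hcard, fun β hβ ↦ ⟨(hF β hβ).1, (hF β hβ).2.1⟩,
    hcover _ _ (fun β ↦ ∏ γ ∈ F.erase β, degree γ) ?_ fun β hβ ↦ ⟨?_, ?_, ?_⟩⟩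
  · rintro _ ⟨β, hβ, rfl⟩
    exact nsmul_mem (AddSubmonoid.subset_closure (hF β hβ).1) _
  · exact Finset.prod_pos fun γ hγ ↦ degree_pos.mpr (hF γ (Finset.mem_of_mem_erase hγ)).2.1
  · rw [Finset.prod_erase_mul _ _ hβ]
    calc ∏ γ ∈ F, degree γ ≤ D ^ F.card :=
          Finset.prod_le_pow_card _ _ _ fun γ hγ ↦ hQ γ (hF γ hγ).1
      _ ≤ D ^ R := Nat.pow_le_pow_right hD hcard
  · exact AddSubmonoid.subset_closure (Set.mem_image_of_mem _ hβ)

theorem HasLinearCover.single {S Q : Set (ι → ℕ)} {B D R p n : ℕ} [DecidableEq ι] {j : ι}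
    (h : HasLinearCover S Q B (Pi.single j n)) (hQ : ∀ β ∈ Q, degree β ≤ D)
    (hR : (R * D + 1) ^ Fintype.card ι < 2 ^ R) (hn : B < n) (hp : 0 < p)
    (hpQ : ∀ a, 0 < a → Pi.single j a ∈ Q → Pi.single j p ∈ AddSubmonoid.closure Q) :
    HasLinearCover S {Pi.single j p} (B + R * (p * D)) (Pi.single j n) := by
  obtain ⟨F, -, hF, hne, hcover⟩ := h.exists_finset_forall_scale hQ hR
  have hsingle : ∀ β ∈ F, β = Pi.single j (β j) := by
    intro β hβ
    ext i
    rcases eq_or_ne i j with rfl | hij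
    · rw [Pi.single_eq_same]
    · have := (hF β hβ).2.2 i
      rw [Pi.single_eq_of_ne hij] at this ⊢
      exact Nat.le_zero.mp this
  have hpj : Pi.single j p ∈ AddSubmonoid.closure Q := by
    obtain ⟨β, hβ⟩ := Finset.nonempty_iff_ne_empty.mpr fun hF ↦ hn.not_ge (by simpa using hne hF)
    refine hpQ (β j) (Nat.pos_of_ne_zero fun h0 ↦ (hF β hβ).2.1 ?_) (hsingle β hβ ▸ (hF β hβ).1)
    rw [hsingle β hβ, h0, Pi.single_zero]
  refine hcover _ _ (fun _ ↦ p) (Set.singleton_subset_iff.mpr hpj) fun β hβ ↦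
    ⟨hp, Nat.mul_le_mul_left p (hQ β (hF β hβ).1), ?_⟩
  have hmul : p • β = β j • Pi.single j p := by
    conv_lhs => rw [hsingle β hβ]
    rw [← Pi.single_smul, ← Pi.single_smul, smul_eq_mul, smul_eq_mul, mul_comm]
  exact hmul ▸ nsmul_mem (AddSubmonoid.subset_closure (Set.mem_singleton _)) _

theorem exists_common_single_multiple {κ : Type*} [Fintype κ] [DecidableEq ι] (Y : κ → Set (ι → ℕ))
    {D : ℕ} (hD : 1 ≤ D) (hY : ∀ A, ∀ β ∈ Y A, degree β ≤ D) (j : ι) :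
    ∃ p, 0 < p ∧ p ≤ D ^ Fintype.card κ ∧
      ∀ A a, 0 < a → Pi.single j a ∈ Y A → Pi.single j p ∈ AddSubmonoid.closure (Y A) := by
  classical
  have hc : ∀ A, ∃ c, 0 < c ∧ c ≤ D ∧ ∀ a, 0 < a → Pi.single j a ∈ Y A → Pi.single j c ∈ Y A := by
    intro A
    by_cases hA : ∃ a, 0 < a ∧ Pi.single j a ∈ Y A
    · obtain ⟨c, hc, hcA⟩ := hA
      exact ⟨c, hc, by simpa using hY A _ hcA, fun _ _ _ ↦ hcA⟩
    · exact ⟨1, one_pos, hD, fun a ha haA ↦ absurd ⟨a, ha, haA⟩ hA⟩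
  choose c hpos hle hmem using hc
  refine ⟨∏ A, c A, Finset.prod_pos fun A _ ↦ hpos A,
    Finset.prod_le_pow_card _ _ _ fun A _ ↦ hle A, fun A a ha haA ↦ ?_⟩
  rw [← Finset.prod_erase_mul _ _ (Finset.mem_univ A), ← smul_eq_mul, Pi.single_smul]
  exact nsmul_mem (AddSubmonoid.subset_closure (hmem A a ha haA)) _

end Periods

section Fill

variable {ι : Type*} [Fintype ι] {P : Set (ι → ℕ)} {L : ℕ}

theorem exists_add_eq_le (hP : ∀ β ∈ P, degree β ≤ L) {u z : ι → ℕ}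
    (hz : z ∈ AddSubmonoid.closure P) (a : ι → ℕ) (hu : u ≤ a + z) :
    ∃ y ∈ AddSubmonoid.closure P, ∃ z' ∈ AddSubmonoid.closure P,
      y + z' = z ∧ u ≤ a + y ∧ degree y ≤ degree (u - a) * L := by
  induction hz using AddSubmonoid.closure_induction_left generalizing a with
  | zero => exact ⟨0, zero_mem _, 0, zero_mem _, add_zero _, hu, by simp⟩
  | add_left β hβ z _ ih =>
    by_cases huz : u ≤ a + z
    · obtain ⟨y, hy, z', hz', rfl, hle, hdeg⟩ := ih a huz
      exact ⟨y, hy, β + z', add_mem (AddSubmonoid.subset_closure hβ) hz', add_left_comm _ _ _,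
        hle, hdeg⟩
    obtain ⟨y, hy, z', hz', rfl, hle, hdeg⟩ := ih (a + β) (by rwa [add_assoc])
    refine ⟨β + y, add_mem (AddSubmonoid.subset_closure hβ) hy, z', hz', add_assoc _ _ _,
      by rwa [← add_assoc], ?_⟩
    have hlt : degree (u - (a + β)) < degree (u - a) := by
      obtain ⟨i, hi⟩ := not_forall.mp huz
      have hui := hu i
      refine Finset.sum_lt_sum (fun i _ ↦ ?_) ⟨i, Finset.mem_univ i, ?_⟩
      all_goals
        simp only [Pi.add_apply, Pi.sub_apply] at *
        omega
    calc degree (β + y) = degree β + degree y := map_add _ _ _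
      _ ≤ L + degree (u - (a + β)) * L := add_le_add (hP β hβ) hdeg
      _ = (degree (u - (a + β)) + 1) * L := by ring
      _ ≤ degree (u - a) * L := Nat.mul_le_mul_right L hlt

theorem exists_add_eq_le_degree_lt (hP : ∀ β ∈ P, degree β ≤ L) {N : ℕ} {z : ι → ℕ}
    (hz : z ∈ AddSubmonoid.closure P) (a : ι → ℕ) (ha : degree a < N + L)
    (hN : N ≤ degree (a + z)) :
    ∃ y ∈ AddSubmonoid.closure P, ∃ z' ∈ AddSubmonoid.closure P,
      y + z' = z ∧ N ≤ degree (a + y) ∧ degree (a + y) < N + L := by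
  induction hz using AddSubmonoid.closure_induction_left generalizing a with
  | zero => exact ⟨0, zero_mem _, 0, zero_mem _, add_zero _, hN, by rwa [add_zero]⟩
  | add_left β hβ z hz ih =>
    by_cases haN : N ≤ degree a
    · exact ⟨0, zero_mem _, β + z, add_mem (AddSubmonoid.subset_closure hβ) hz, zero_add _,
        by rwa [add_zero], by rwa [add_zero]⟩
    have hlt : degree (a + β) < N + L := by
      rw [map_add]
      exact add_lt_add_of_lt_of_le (not_le.mp haN) (hP β hβ)
    obtain ⟨y, hy, z', hz', rfl, hle, hlt⟩ := ih (a + β) hlt (by rwa [add_assoc])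
    exact ⟨β + y, add_mem (AddSubmonoid.subset_closure hβ) hy, z', hz', add_assoc _ _ _,
      by rwa [← add_assoc], by rwa [← add_assoc]⟩

theorem HasLinearCover.exists_base {S : Set (ι → ℕ)} {B N : ℕ} {u v : ι → ℕ}
    (h : HasLinearCover S P B v) (hP : ∀ β ∈ P, degree β ≤ L) (hL : 0 < L) (hu : u ≤ v)
    (hN : B + degree u * L ≤ N) (hv : N ≤ degree v) :
    ∃ b, u ≤ b ∧ N ≤ degree b ∧ degree b < N + L ∧ (∃ z ∈ AddSubmonoid.closure P, v = b + z) ∧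
      ∀ z ∈ AddSubmonoid.closure P, b + z ∈ S := by
  obtain ⟨b, hb, ⟨x, hx, rfl⟩, hS⟩ := h
  obtain ⟨y, hy, z, hz, rfl, huy, hdeg⟩ := exists_add_eq_le hP hx b hu
  have hlt : degree (b + y) < N + L :=
    calc degree (b + y) = degree b + degree y := map_add _ _ _
      _ ≤ B + degree u * L := add_le_add hb (hdeg.trans (by gcongr; exact tsub_le_self))
      _ ≤ N := hN
      _ < N + L := Nat.lt_add_of_pos_right hL
  obtain ⟨y', hy', z', hz', rfl, hle', hlt'⟩ :=
    exists_add_eq_le_degree_lt hP hz (b + y) hlt (by rwa [add_assoc])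
  refine ⟨b + y + y', huy.trans le_self_add, hle', hlt', ⟨z', hz', ?_⟩, fun x hx ↦ ?_⟩
  · simp only [add_assoc]
  · rw [add_assoc, add_assoc]
    exact hS _ (add_mem hy (add_mem hy' hx))

end Fill

section Parikh

variable {m : ℕ}

theorem parikh_append (u v : List (Fin m)) : parikh (u ++ v) = parikh u + parikh v :=
  funext fun _ ↦ List.count_append

theorem parikh_replicate (k : ℕ) (j : Fin m) : parikh (List.replicate k j) = Pi.single j k := by
  ext i
  simp only [parikh, List.count_replicate, Pi.single_apply, beq_iff_eq, eq_comm (a := i)]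

theorem parikh_singleton (j : Fin m) : parikh [j] = Pi.single j 1 :=
  parikh_replicate 1 j

theorem parikh_cons (j : Fin m) (w : List (Fin m)) :
    parikh (j :: w) = Pi.single j 1 + parikh w := by
  rw [← List.singleton_append, parikh_append, parikh_singleton]

theorem degree_parikh (w : List (Fin m)) : degree (parikh w) = w.length := by
  induction w with
  | nil => exact map_zero degree
  | cons j w ih => rw [parikh_cons, map_add, degree_single, ih, List.length_cons, add_comm]

theorem exists_parikh_eq (v : Fin m → ℕ) : ∃ w : List (Fin m), parikh w = v := by
  refine ⟨(∑ i, Multiset.replicate (v i) i).toList, funext fun i ↦ ?_⟩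
  rw [parikh, ← Multiset.coe_count, Multiset.coe_toList, Multiset.count_sum']
  simp [Multiset.count_replicate]

theorem exists_parikh_append_add_eq {w : List (Fin m)} {v : Fin m → ℕ} (hw : parikh w ≤ v) {N : ℕ}
    (hwN : w.length ≤ N) (hN : N ≤ degree v) :
    ∃ (w' : List (Fin m)) (r : Fin m → ℕ), (w ++ w').length = N ∧ parikh (w ++ w') + r = v := by
  obtain ⟨w', hw'⟩ := exists_parikh_eq (v - parikh w)
  have hsum : parikh w + parikh w' = v := by rw [hw', add_tsub_cancel_of_le hw]
  have hlength : w.length + w'.length = degree v := by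
    rw [← hsum, map_add, degree_parikh, degree_parikh]
  refine ⟨w'.take (N - w.length), parikh (w'.drop (N - w.length)), ?_, ?_⟩
  · rw [List.length_append, List.length_take]
    omega
  · rw [parikh_append, add_assoc, ← parikh_append, List.take_append_drop, hsum]

end Parikh

section Trees

variable {T : Type*} {G : ContextFreeGrammar T}

/-- Derivation trees with root variable `A`, for the rules `A → a` and `A → BC`. Indexing by the
root makes every tree valid by construction. -/
inductive ParseTree (G : ContextFreeGrammar T) : G.NT → Type _
  | leaf {A : G.NT} {a : T} (h : ⟨A, [.terminal a]⟩ ∈ G.rules) : ParseTree G A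
  | node {A B C : G.NT} (h : ⟨A, [.nonterminal B, .nonterminal C]⟩ ∈ G.rules)
      (l : ParseTree G B) (r : ParseTree G C) : ParseTree G A

/-- A tree of height one over `A` in which the child `B` is left open and its sibling, a complete
derivation tree, is stored. -/
inductive ParseStep (G : ContextFreeGrammar T) : G.NT → G.NT → Type _
  | left {A B C : G.NT} (h : ⟨A, [.nonterminal B, .nonterminal C]⟩ ∈ G.rules)
      (r : ParseTree G C) : ParseStep G A B
  | right {A B C : G.NT} (h : ⟨A, [.nonterminal B, .nonterminal C]⟩ ∈ G.rules)
      (l : ParseTree G B) : ParseStep G A C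

/-- Derivation trees with root `A` and one hole of type `B`, stored as the path from the root to
the hole. A *pump* is a nontrivial context of type `A`, `A`. -/
inductive ParseContext (G : ContextFreeGrammar T) : G.NT → G.NT → Type _
  | hole {A : G.NT} : ParseContext G A A
  | cons {A B C : G.NT} (e : ParseStep G A B) (c : ParseContext G B C) : ParseContext G A C

/-- The tree obtained from a step by supplying the open child. -/
def ParseStep.fill {A B : G.NT} : ParseStep G A B → ParseTree G B → ParseTree G A
  | .left h r, t => .node h t r
  | .right h l, t => .node h l t

namespace ParseContext

/-- The tree obtained by filling the hole of a context. -/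
def plug {A B : G.NT} : ParseContext G A B → ParseTree G B → ParseTree G A
  | hole, t => t
  | cons e c, t => e.fill (c.plug t)

/-- Composition of contexts: the second one is put into the hole of the first one. -/
def comp {A B C : G.NT} : ParseContext G A B → ParseContext G B C → ParseContext G A C
  | hole, d => d
  | cons e c, d => cons e (c.comp d)

end ParseContext

section Yield

variable [DecidableEq T]

/-- The Parikh vector of the word read off the leaves of a tree. -/
def ParseTree.yield {A : G.NT} : ParseTree G A → T → ℕ
  | @ParseTree.leaf _ _ _ a _ => Pi.single a 1
  | .node _ l r => l.yield + r.yield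

/-- The Parikh vector of the terminals of a step. -/
def ParseStep.yield {A B : G.NT} : ParseStep G A B → T → ℕ
  | .left _ r => r.yield
  | .right _ l => l.yield

/-- The Parikh vector of the terminals of a context. -/
def ParseContext.yield {A B : G.NT} : ParseContext G A B → T → ℕ
  | .hole => 0
  | .cons e c => e.yield + c.yield

theorem ParseStep.yield_fill {A B : G.NT} (e : ParseStep G A B) (t : ParseTree G B) :
    (e.fill t).yield = e.yield + t.yield := by
  cases e
  · exact add_comm _ _
  · rfl

theorem ParseContext.yield_plug {A B : G.NT} (c : ParseContext G A B) (t : ParseTree G B) :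
    (c.plug t).yield = c.yield + t.yield := by
  induction c with
  | hole => exact (zero_add _).symm
  | cons e c ih => rw [plug, e.yield_fill, ih, yield, add_assoc]

theorem ParseContext.yield_comp {A B C : G.NT} (c : ParseContext G A B)
    (d : ParseContext G B C) : (c.comp d).yield = c.yield + d.yield := by
  induction c with
  | hole => exact (zero_add _).symm
  | cons e c ih => rw [comp, yield, ih, yield, add_assoc]

end Yield

section Vars

variable [DecidableEq G.NT]

/-- The variables occurring in a tree. -/
def ParseTree.vars {A : G.NT} : ParseTree G A → Finset G.NT
  | .leaf _ => {A}
  | .node _ l r => insert A (l.vars ∪ r.vars)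

/-- The variables occurring in a step, the one of the open child excepted. -/
def ParseStep.vars {A B : G.NT} : ParseStep G A B → Finset G.NT
  | .left _ r => insert A r.vars
  | .right _ l => insert A l.vars

/-- The variables occurring in a context, the one of the hole excepted. -/
def ParseContext.vars {A B : G.NT} : ParseContext G A B → Finset G.NT
  | .hole => ∅
  | .cons e c => e.vars ∪ c.vars

theorem ParseStep.source_mem_vars {A B : G.NT} (e : ParseStep G A B) : A ∈ e.vars := by
  cases e <;> exact Finset.mem_insert_self _ _

theorem ParseStep.vars_fill {A B : G.NT} (e : ParseStep G A B) (t : ParseTree G B) :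
    (e.fill t).vars = e.vars ∪ t.vars := by
  cases e
  · rw [fill, vars, ParseTree.vars, Finset.insert_union, Finset.union_comm]
  · rw [fill, vars, ParseTree.vars, Finset.insert_union]

theorem ParseContext.vars_plug {A B : G.NT} (c : ParseContext G A B) (t : ParseTree G B) :
    (c.plug t).vars = c.vars ∪ t.vars := by
  induction c with
  | hole => exact (Finset.empty_union _).symm
  | cons e c ih => rw [plug, e.vars_fill, ih, vars, Finset.union_assoc]

theorem ParseContext.vars_comp {A B C : G.NT} (c : ParseContext G A B)
    (d : ParseContext G B C) : (c.comp d).vars = c.vars ∪ d.vars := by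
  induction c with
  | hole => exact (Finset.empty_union _).symm
  | cons e c ih => rw [comp, vars, ih, vars, Finset.union_assoc]

theorem ParseTree.exists_plug_of_mem_vars {A B : G.NT} (t : ParseTree G A) (hB : B ∈ t.vars) :
    ∃ (c : ParseContext G A B) (s : ParseTree G B), c.plug s = t := by
  induction t with
  | leaf h =>
    obtain rfl := Finset.mem_singleton.mp hB
    exact ⟨.hole, .leaf h, rfl⟩
  | node h l r ihl ihr =>
    rcases Finset.mem_insert.mp hB with rfl | hB
    · exact ⟨.hole, .node h l r, rfl⟩
    rcases Finset.mem_union.mp hB with hB | hB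
    · obtain ⟨c, s, rfl⟩ := ihl hB
      exact ⟨.cons (.left h r) c, s, rfl⟩
    · obtain ⟨c, s, rfl⟩ := ihr hB
      exact ⟨.cons (.right h l) c, s, rfl⟩

end Vars

end Trees

section Reduction

variable {T : Type*} {G : ContextFreeGrammar T} [DecidableEq G.NT]

/-- A tree is reduced with respect to `W` if cutting a pump out of one of its subtrees always
removes an element of `W` from the variables of that subtree. -/
def ParseTree.Reduced (W : Finset G.NT) {A : G.NT} : ParseTree G A → Prop
  | .leaf _ => True
  | .node h l r => l.Reduced W ∧ r.Reduced W ∧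
      ∀ (B : G.NT) (e : ParseStep G A B) (c : ParseContext G B A) (s : ParseTree G A),
        e.fill (c.plug s) = .node h l r → ¬ W ∩ (ParseTree.node h l r).vars ⊆ s.vars

theorem ParseTree.Reduced.of_fill {W : Finset G.NT} {A B : G.NT} {e : ParseStep G A B}
    {t : ParseTree G B} (h : (e.fill t).Reduced W) : t.Reduced W := by
  cases e
  · exact h.1
  · exact h.2.1

theorem ParseTree.Reduced.of_plug {W : Finset G.NT} {A B : G.NT} {c : ParseContext G A B}
    {t : ParseTree G B} (h : (c.plug t).Reduced W) : t.Reduced W := by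
  induction c with
  | hole => exact h
  | cons e c ih => exact ih h.of_fill

theorem ParseTree.Reduced.not_subset_vars {W : Finset G.NT} {A B : G.NT} {e : ParseStep G A B}
    {c : ParseContext G B A} {s : ParseTree G A}
    (h : (e.fill (c.plug s)).Reduced W) : ¬ W ∩ (e.fill (c.plug s)).vars ⊆ s.vars := by
  cases e with
  | left hr r => exact h.2.2 _ (.left hr r) c s rfl
  | right hr l => exact h.2.2 _ (.right hr l) c s rfl

theorem ParseTree.Reduced.of_fill_eq_node {W : Finset G.NT} {A B C D : G.NT}
    {h : ⟨A, [.nonterminal B, .nonterminal C]⟩ ∈ G.rules} {l : ParseTree G B} {r : ParseTree G C}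
    (hl : l.Reduced W) (hr : r.Reduced W) {e : ParseStep G A D} {t : ParseTree G D}
    (he : e.fill t = .node h l r) : t.Reduced W := by
  cases e <;> cases he <;> assumption

variable [Fintype G.NT]

open Classical in
/-- The variables that label the root of a subtree containing all variables of `t` from `W`. -/
noncomputable def ParseTree.heads (W : Finset G.NT) {A : G.NT} (t : ParseTree G A) :
    Finset G.NT :=
  Finset.univ.filter fun B ↦ ∃ (d : ParseContext G A B) (s : ParseTree G B),
    d.plug s = t ∧ W ∩ t.vars ⊆ s.vars

theorem ParseTree.mem_heads {W : Finset G.NT} {A B : G.NT} {t : ParseTree G A} :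
    B ∈ t.heads W ↔ ∃ (d : ParseContext G A B) (s : ParseTree G B),
      d.plug s = t ∧ W ∩ t.vars ⊆ s.vars := by
  simp [heads]

theorem ParseTree.root_mem_heads (W : Finset G.NT) {A : G.NT} (t : ParseTree G A) :
    A ∈ t.heads W :=
  mem_heads.mpr ⟨.hole, t, rfl, Finset.inter_subset_right⟩

/-- An upper bound for the height of a reduced tree. -/
noncomputable def ParseTree.rank (W : Finset G.NT) {A : G.NT} (t : ParseTree G A) : ℕ :=
  Fintype.card G.NT * (W ∩ t.vars).card + (t.heads W).card

theorem ParseTree.Reduced.rank_lt {W : Finset G.NT} {A B : G.NT} {e : ParseStep G A B}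
    {t : ParseTree G B} (h : (e.fill t).Reduced W) : t.rank W < (e.fill t).rank W := by
  have hsub : W ∩ t.vars ⊆ W ∩ (e.fill t).vars := by
    rw [e.vars_fill]
    exact Finset.inter_subset_inter_left Finset.subset_union_right
  have hroot := (e.fill t).root_mem_heads W
  rcases hsub.eq_or_ssubset with heq | hlt
  · -- no element of `W` is lost, so the root of `e.fill t` is a head that `t` does not have
    have hheads : t.heads W ⊂ (e.fill t).heads W := by
      refine Finset.ssubset_iff_of_subset (fun D hD ↦ ?_) |>.mpr ⟨A, hroot, fun hA ↦ ?_⟩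
      · obtain ⟨d, s, rfl, hs⟩ := mem_heads.mp hD
        exact mem_heads.mpr ⟨.cons e d, s, rfl, heq ▸ hs⟩
      · obtain ⟨d, s, rfl, hs⟩ := mem_heads.mp hA
        exact h.not_subset_vars (heq ▸ hs)
    have := Finset.card_lt_card hheads
    simp only [rank, heq]
    omega
  · have hcard : (W ∩ t.vars).card + 1 ≤ (W ∩ (e.fill t).vars).card := Finset.card_lt_card hlt
    have hmul := Nat.mul_le_mul_left (Fintype.card G.NT) hcard
    have hheads : (t.heads W).card ≤ Fintype.card G.NT := Finset.card_le_univ _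
    have hpos : 0 < ((e.fill t).heads W).card := Finset.card_pos.mpr ⟨A, hroot⟩
    rw [mul_add_one] at hmul
    simp only [rank]
    omega

variable [DecidableEq T] [Fintype T]

theorem ParseTree.Reduced.degree_yield_le_two_pow_rank {W : Finset G.NT} {A : G.NT}
    {t : ParseTree G A} (h : t.Reduced W) : degree t.yield ≤ 2 ^ t.rank W := by
  induction t with
  | leaf => simpa [yield] using Nat.one_le_two_pow
  | node hr l r ihl ihr =>
    have hl : l.rank W < (node hr l r).rank W := rank_lt (e := .left hr r) h
    have hr' : r.rank W < (node hr l r).rank W := rank_lt (e := .right hr l) h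
    calc degree (l.yield + r.yield) = degree l.yield + degree r.yield := map_add _ _ _
      _ ≤ 2 ^ l.rank W + 2 ^ r.rank W := add_le_add (ihl h.1) (ihr h.2.1)
      _ ≤ 2 ^ ((node hr l r).rank W - 1) + 2 ^ ((node hr l r).rank W - 1) := by
        gcongr <;> omega
      _ = 2 ^ (node hr l r).rank W := by
        rw [← mul_two, ← pow_succ, Nat.sub_add_cancel (by omega)]

theorem ParseTree.Reduced.degree_yield_le {W : Finset G.NT} {A : G.NT} {t : ParseTree G A}
    (h : t.Reduced W) :
    degree t.yield ≤ 2 ^ (Fintype.card G.NT * W.card + Fintype.card G.NT) := by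
  refine h.degree_yield_le_two_pow_rank.trans (Nat.pow_le_pow_right two_pos ?_)
  exact add_le_add (Nat.mul_le_mul_left _ (Finset.card_le_card Finset.inter_subset_left))
    (Finset.card_le_univ _)

/-- The monoid `K` contains the yields of all pumps `cons e c` of degree at most `b` whose variables
belong to `V`. -/
def ContainsPumps (K : AddSubmonoid (T → ℕ)) (V : Finset G.NT) (b : ℕ) : Prop :=
  ∀ ⦃A B : G.NT⦄ (e : ParseStep G A B) (c : ParseContext G B A),
    (ParseContext.cons e c).vars ⊆ V → degree (ParseContext.cons e c).yield ≤ b →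
      (ParseContext.cons e c).yield ∈ K

theorem ParseTree.exists_reduced_of_reduced_children {W V : Finset G.NT}
    {K : AddSubmonoid (T → ℕ)}
    (hK : ContainsPumps K V (2 ^ (Fintype.card G.NT * W.card + Fintype.card G.NT + 1)))
    {A B C : G.NT} (h : ⟨A, [.nonterminal B, .nonterminal C]⟩ ∈ G.rules) {l : ParseTree G B}
    {r : ParseTree G C} (hl : l.Reduced W) (hr : r.Reduced W) (hV : (node h l r).vars ⊆ V) :
    ∃ t : ParseTree G A, t.Reduced W ∧ t.vars ⊆ (node h l r).vars ∧
      W ∩ (node h l r).vars ⊆ t.vars ∧ ∃ x ∈ K, (node h l r).yield = t.yield + x := by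
  by_cases hcut : ∃ (D : G.NT) (e : ParseStep G A D) (c : ParseContext G D A)
      (s : ParseTree G A), e.fill (c.plug s) = node h l r ∧ W ∩ (node h l r).vars ⊆ s.vars
  · obtain ⟨D, e, c, s, hs, hsW⟩ := hcut
    have hvars : (node h l r).vars = (ParseContext.cons e c).vars ∪ s.vars :=
      hs ▸ (ParseContext.cons e c).vars_plug s
    have hyield : (node h l r).yield = (ParseContext.cons e c).yield + s.yield :=
      hs ▸ (ParseContext.cons e c).yield_plug s
    have hdeg : degree (ParseContext.cons e c).yield ≤
        2 ^ (Fintype.card G.NT * W.card + Fintype.card G.NT + 1) := calc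
      _ ≤ degree (l.yield + r.yield) := degree_mono (le_self_add.trans_eq hyield.symm)
      _ ≤ _ := by
        rw [map_add, pow_succ, mul_two]
        exact add_le_add hl.degree_yield_le hr.degree_yield_le
    obtain ⟨hcV, -⟩ := Finset.union_subset_iff.mp (hvars ▸ hV)
    exact ⟨s, (Reduced.of_fill_eq_node hl hr hs).of_plug, hvars ▸ Finset.subset_union_right, hsW,
      _, hK e c hcV hdeg, hyield.trans (add_comm _ _)⟩
  · push Not at hcut
    exact ⟨node h l r, ⟨hl, hr, hcut⟩, subset_rfl, Finset.inter_subset_right, 0, K.zero_mem,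
      (add_zero _).symm⟩

theorem ParseTree.exists_reduced (W : Finset G.NT) {V : Finset G.NT} {K : AddSubmonoid (T → ℕ)}
    (hK : ContainsPumps K V (2 ^ (Fintype.card G.NT * W.card + Fintype.card G.NT + 1)))
    {A : G.NT} (t : ParseTree G A) (ht : t.vars ⊆ V) :
    ∃ t' : ParseTree G A, t'.Reduced W ∧ t'.vars ⊆ t.vars ∧ W ∩ t.vars ⊆ t'.vars ∧
      ∃ x ∈ K, t.yield = t'.yield + x := by
  induction t with
  | leaf h => exact ⟨.leaf h, trivial, subset_rfl, Finset.inter_subset_right, 0, K.zero_mem,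
      (add_zero _).symm⟩
  | node h l r ihl ihr =>
    obtain ⟨hl, hr⟩ := Finset.union_subset_iff.mp ((Finset.subset_insert _ _).trans ht)
    obtain ⟨l', hlred, hlV, hlW, x, hx, hlx⟩ := ihl hl
    obtain ⟨r', hrred, hrV, hrW, y, hy, hry⟩ := ihr hr
    have hvars : (node h l' r').vars ⊆ (node h l r).vars :=
      Finset.insert_subset_insert _ (Finset.union_subset_union hlV hrV)
    have hW : W ∩ (node h l r).vars ⊆ W ∩ (node h l' r').vars := by
      simp only [vars, Finset.subset_iff, Finset.mem_inter, Finset.mem_insert,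
        Finset.mem_union] at hlW hrW ⊢
      grind
    obtain ⟨t, htred, htV, htW, z, hz, htz⟩ :=
      exists_reduced_of_reduced_children hK h hlred hrred (hvars.trans ht)
    refine ⟨t, htred, htV.trans hvars, hW.trans htW, z + (x + y),
      K.add_mem hz (K.add_mem hx hy), ?_⟩
    rw [← add_assoc t.yield, ← htz, yield, yield, hlx, hry, add_add_add_comm]

end Reduction

section Pumps

variable {T : Type*} {G : ContextFreeGrammar T} [DecidableEq G.NT]

/-- The variables on the path from the root of a context to its hole, both ends included. -/
def ParseContext.spine {A B : G.NT} : ParseContext G A B → Finset G.NT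
  | .hole => {A}
  | .cons _ c => insert A c.spine

theorem ParseContext.exists_comp_of_mem_spine {A B C : G.NT} (c : ParseContext G A B)
    (hC : C ∈ c.spine) :
    ∃ (d : ParseContext G A C) (f : ParseContext G C B), d.comp f = c := by
  induction c with
  | hole =>
    obtain rfl := Finset.mem_singleton.mp hC
    exact ⟨.hole, .hole, rfl⟩
  | cons e c ih =>
    rcases Finset.mem_insert.mp hC with rfl | hC
    · exact ⟨.hole, .cons e c, rfl⟩
    · obtain ⟨d, f, rfl⟩ := ih hC
      exact ⟨.cons e d, f, rfl⟩

variable [DecidableEq T] [Fintype T]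

/-- The path to the hole repeats no variable, and all steps along it have degree at most `b`. -/
def ParseContext.Simple (b : ℕ) {A B : G.NT} : ParseContext G A B → Prop
  | .hole => True
  | .cons e c => A ∉ c.spine ∧ degree e.yield ≤ b ∧ c.Simple b

theorem ParseContext.Simple.of_comp {b : ℕ} {A B C : G.NT} {c : ParseContext G A B}
    {d : ParseContext G B C} (h : (c.comp d).Simple b) : d.Simple b := by
  induction c with
  | hole => exact h
  | cons e c ih => exact ih h.2.2

theorem ParseContext.Simple.degree_yield_add_le {b : ℕ} {A B : G.NT} {c : ParseContext G A B}
    (h : c.Simple b) : degree c.yield + b ≤ c.spine.card * b := by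
  induction c with
  | hole => simp [yield, spine]
  | cons e c ih =>
    obtain ⟨hspine, he, hc⟩ := h
    have := ih hc
    rw [yield, spine, map_add, Finset.card_insert_of_notMem hspine, add_one_mul]
    omega

variable [Fintype G.NT]

theorem ParseContext.Simple.degree_yield_add_le_card_mul {b : ℕ} {A B : G.NT}
    {c : ParseContext G A B} (h : c.Simple b) :
    degree c.yield + b ≤ Fintype.card G.NT * b :=
  h.degree_yield_add_le.trans (Nat.mul_le_mul_right b (Finset.card_le_univ _))

theorem ParseStep.exists_degree_yield_le {V : Finset G.NT} {K : AddSubmonoid (T → ℕ)}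
    (hK : ContainsPumps K V (2 ^ (Fintype.card G.NT + 1))) {A B : G.NT} (e : ParseStep G A B)
    (he : e.vars ⊆ V) :
    ∃ e' : ParseStep G A B, degree e'.yield ≤ 2 ^ Fintype.card G.NT ∧ e'.vars ⊆ V ∧
      ∃ x ∈ K, e.yield = e'.yield + x := by
  have reduce {C : G.NT} (t : ParseTree G C) (ht : t.vars ⊆ V) : ∃ t' : ParseTree G C,
      degree t'.yield ≤ 2 ^ Fintype.card G.NT ∧ t'.vars ⊆ V ∧ ∃ x ∈ K, t.yield = t'.yield + x := by
    obtain ⟨t', hred, hV, -, hx⟩ := t.exists_reduced ∅ (by simpa using hK) ht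
    exact ⟨t', by simpa using hred.degree_yield_le, hV.trans ht, hx⟩
  cases e with
  | left h r =>
    obtain ⟨hA, hr⟩ := Finset.insert_subset_iff.mp he
    obtain ⟨r', hdeg, hr'V, hx⟩ := reduce r hr
    exact ⟨.left h r', hdeg, Finset.insert_subset hA hr'V, hx⟩
  | right h l =>
    obtain ⟨hA, hl⟩ := Finset.insert_subset_iff.mp he
    obtain ⟨l', hdeg, hl'V, hx⟩ := reduce l hl
    exact ⟨.right h l', hdeg, Finset.insert_subset hA hl'V, hx⟩

theorem ParseContext.degree_yield_cons_le {A B C : G.NT} {e : ParseStep G A B}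
    {c : ParseContext G B C} (he : degree e.yield ≤ 2 ^ Fintype.card G.NT)
    (hc : c.Simple (2 ^ Fintype.card G.NT)) :
    degree (cons e c).yield ≤ 2 ^ (2 * Fintype.card G.NT + 1) := by
  set h := Fintype.card G.NT
  calc degree (e.yield + c.yield) ≤ 2 ^ h + degree c.yield := by
        rw [map_add]
        exact Nat.add_le_add_right he _
    _ ≤ h * 2 ^ h := by
        rw [add_comm]
        exact hc.degree_yield_add_le_card_mul
    _ ≤ 2 ^ h * 2 ^ h := Nat.mul_le_mul_right _ Nat.lt_two_pow_self.le
    _ = 2 ^ (2 * h) := by rw [← pow_add, two_mul]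
    _ ≤ 2 ^ (2 * h + 1) := Nat.pow_le_pow_right two_pos (Nat.le_succ _)

theorem ContainsPumps.step {V : Finset G.NT} {K : AddSubmonoid (T → ℕ)}
    (hK : ContainsPumps K V (2 ^ (2 * Fintype.card G.NT + 1))) :
    ContainsPumps K V (2 ^ (Fintype.card G.NT + 1)) := fun _ _ e c hV hdeg ↦
  hK e c hV (hdeg.trans (Nat.pow_le_pow_right two_pos (by omega)))

theorem ParseContext.exists_simple {V : Finset G.NT} {K : AddSubmonoid (T → ℕ)}
    (hK : ContainsPumps K V (2 ^ (2 * Fintype.card G.NT + 1))) {A B : G.NT}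
    (c : ParseContext G A B) (hc : c.vars ⊆ V) :
    ∃ c' : ParseContext G A B, c'.Simple (2 ^ Fintype.card G.NT) ∧ c'.vars ⊆ V ∧
      ∃ x ∈ K, c.yield = c'.yield + x := by
  induction c with
  | hole => exact ⟨.hole, trivial, Finset.empty_subset _, 0, K.zero_mem, (add_zero _).symm⟩
  | @cons A _ _ e c ih =>
    obtain ⟨he, hcV⟩ := Finset.union_subset_iff.mp hc
    obtain ⟨e, hdeg, heV, x, hx, hex⟩ := e.exists_degree_yield_le hK.step he
    obtain ⟨c, hsimple, hcV, y, hy, hcy⟩ := ih hcV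
    have hyield : (e.yield + x) + (c.yield + y) = (e.yield + c.yield) + (x + y) :=
      add_add_add_comm _ _ _ _
    by_cases hA : A ∈ c.spine
    · -- the part of the path between the two occurrences of `A` is a pump
      obtain ⟨d, f, rfl⟩ := c.exists_comp_of_mem_spine hA
      obtain ⟨hdV, hfV⟩ := Finset.union_subset_iff.mp (d.vars_comp f ▸ hcV)
      have hsplit : (cons e (d.comp f)).yield = (cons e d).yield + f.yield := by
        rw [yield, yield_comp, ← add_assoc, yield]
      have hle : degree (cons e d).yield ≤ 2 ^ (2 * Fintype.card G.NT + 1) :=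
        (degree_mono (le_self_add.trans_eq hsplit.symm)).trans (degree_yield_cons_le hdeg hsimple)
      have hpump : (cons e d).yield ∈ K := hK e d (Finset.union_subset heV hdV) hle
      refine ⟨f, hsimple.of_comp, hfV, _, K.add_mem hpump (K.add_mem hx hy), ?_⟩
      rw [← add_assoc, add_comm f.yield, ← hsplit, yield, yield, hex, hcy, hyield]
    · exact ⟨cons e c, ⟨hA, hdeg, hsimple⟩, Finset.union_subset heV hcV, x + y,
        K.add_mem hx hy, by rw [yield, yield, hex, hcy, hyield]⟩

variable (G) in
/-- The Parikh vectors of degree at most `D` of the pumps at the variable `A`. -/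
def pumpYields (D : ℕ) (A : G.NT) : Set (T → ℕ) :=
  {v | degree v ≤ D ∧ ∃ (B : G.NT) (e : ParseStep G A B) (c : ParseContext G B A),
    (ParseContext.cons e c).yield = v}

variable (G) in
/-- The Parikh vectors of the pumps of degree at most `2 ^ (2 * h + 1)` at the variables in `V`,
where `h` is the number of variables of the grammar. -/
def pumpPeriods (V : Finset G.NT) : Set (T → ℕ) :=
  ⋃ A ∈ V, pumpYields G (2 ^ (2 * Fintype.card G.NT + 1)) A

theorem containsPumps_closure_pumpPeriods (V : Finset G.NT) :
    ContainsPumps (AddSubmonoid.closure (pumpPeriods G V)) V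
      (2 ^ (2 * Fintype.card G.NT + 1)) := fun _ B e c hV hdeg ↦
  AddSubmonoid.subset_closure <| Set.mem_biUnion
    (hV (Finset.mem_union_left _ e.source_mem_vars)) ⟨hdeg, B, e, c, rfl⟩

theorem ParseContext.yield_cons_mem_closure_pumpPeriods {V : Finset G.NT} {A B : G.NT}
    (e : ParseStep G A B) (c : ParseContext G B A) (hV : (cons e c).vars ⊆ V) :
    (cons e c).yield ∈ AddSubmonoid.closure (pumpPeriods G V) := by
  have hK := containsPumps_closure_pumpPeriods V
  obtain ⟨he, hc⟩ := Finset.union_subset_iff.mp hV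
  obtain ⟨e', hdeg, heV, x, hx, hex⟩ := e.exists_degree_yield_le hK.step he
  obtain ⟨c', hsimple, hcV, y, hy, hcy⟩ := c.exists_simple hK hc
  have hpump := hK e' c' (Finset.union_subset heV hcV) (degree_yield_cons_le hdeg hsimple)
  rw [yield, hex, hcy, add_add_add_comm]
  exact add_mem hpump (add_mem hx hy)

theorem ParseTree.exists_yield_eq_add_pumps {A : G.NT} (t : ParseTree G A) :
    ∃ t' : ParseTree G A, t'.vars = t.vars ∧
      degree t'.yield ≤ 2 ^ (Fintype.card G.NT * Fintype.card G.NT + Fintype.card G.NT) ∧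
      ∃ x ∈ AddSubmonoid.closure (pumpPeriods G t.vars), t.yield = t'.yield + x := by
  obtain ⟨t', hred, hsub, hsup, hx⟩ := t.exists_reduced Finset.univ
    (fun _ _ e c hV _ ↦ ParseContext.yield_cons_mem_closure_pumpPeriods e c hV) subset_rfl
  rw [Finset.univ_inter] at hsup
  exact ⟨t', hsub.antisymm hsup, by simpa using hred.degree_yield_le, hx⟩

theorem ParseTree.exists_yield_add_pumps {A : G.NT} (t : ParseTree G A) {V : Finset G.NT}
    (hV : V ⊆ t.vars) {x : T → ℕ} (hx : x ∈ AddSubmonoid.closure (pumpPeriods G V)) :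
    ∃ t' : ParseTree G A, t'.yield = t.yield + x := by
  suffices ∃ t' : ParseTree G A, V ⊆ t'.vars ∧ t'.yield = t.yield + x from
    this.imp fun _ h ↦ h.2
  induction hx using AddSubmonoid.closure_induction_right with
  | zero => exact ⟨t, hV, (add_zero _).symm⟩
  | add_right x _ v hv ih =>
    obtain ⟨t', ht', hx⟩ := ih
    obtain ⟨B, hB, -, _, e, c, rfl⟩ := Set.mem_iUnion₂.mp hv
    obtain ⟨d, s, rfl⟩ := t'.exists_plug_of_mem_vars (ht' hB)
    refine ⟨d.plug ((ParseContext.cons e c).plug s), ht'.trans ?_, ?_⟩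
    · rw [d.vars_plug, d.vars_plug, ParseContext.vars_plug]
      exact Finset.union_subset_union_right Finset.subset_union_right
    · rw [← add_assoc, ← hx, d.yield_plug, d.yield_plug, ParseContext.yield_plug]
      abel

end Pumps

section Grammar

open scoped Pointwise

variable {m : ℕ} {G : ContextFreeGrammar (Fin m)}

/-- The Parikh vectors derivable from a symbol of a grammar in Chomsky normal form: those of the
derivation trees, and `0` for the initial variable. -/
def symbolYields : Symbol (Fin m) G.NT → Set (Fin m → ℕ)
  | .terminal a => {Pi.single a 1}
  | .nonterminal A => Set.range (ParseTree.yield (A := A)) ∪ {v | v = 0 ∧ A = G.initial}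

/-- The Parikh vectors derivable from a sentential form, computed symbol by symbol. -/
def formYields (u : List (Symbol (Fin m) G.NT)) : Set (Fin m → ℕ) := (u.map symbolYields).sum

theorem formYields_append (u v : List (Symbol (Fin m) G.NT)) :
    formYields (u ++ v) = formYields u + formYields v := by
  simp only [formYields, List.map_append, List.sum_append]

theorem formYields_singleton (s : Symbol (Fin m) G.NT) : formYields [s] = symbolYields s := by
  simp [formYields]

theorem parikh_mem_formYields (w : List (Fin m)) :
    parikh w ∈ formYields (G := G) (w.map .terminal) := by
  induction w with
  | nil => exact rfl
  | cons a w ih =>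
    rw [parikh_cons, List.map_cons, ← List.singleton_append, formYields_append,
      formYields_singleton]
    exact Set.add_mem_add rfl ih

theorem formYields_output_subset (hG : IsCNF G) {r : ContextFreeRule (Fin m) G.NT}
    (hr : r ∈ G.rules) : formYields r.output ⊆ symbolYields (.nonterminal r.input) := by
  obtain ⟨A, u⟩ := r
  rcases hG _ hr with ⟨a, rfl⟩ | ⟨C, D, hC, hD, rfl⟩ | ⟨rfl, rfl⟩
  · rw [formYields_singleton]
    rintro _ rfl
    exact .inl ⟨.leaf hr, rfl⟩
  · rw [← List.singleton_append, formYields_append, formYields_singleton, formYields_singleton]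
    rintro _ ⟨_, ⟨l, rfl⟩ | h, _, ⟨r, rfl⟩ | h', rfl⟩
    · exact .inl ⟨.node hr l r, rfl⟩
    · exact absurd h'.2 hD
    all_goals exact absurd h.2 hC
  · rintro _ rfl
    exact .inr ⟨rfl, rfl⟩

theorem formYields_subset_of_derives (hG : IsCNF G) {u v : List (Symbol (Fin m) G.NT)}
    (h : G.Derives u v) : formYields v ⊆ formYields u := by
  induction h with
  | refl => rfl
  | tail _ hstep ih =>
    refine Set.Subset.trans ?_ ih
    obtain ⟨r, hr, hrw⟩ := hstep
    obtain ⟨p, q, rfl, rfl⟩ := hrw.exists_parts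
    simp only [formYields_append, formYields_singleton]
    gcongr
    exact formYields_output_subset hG hr

theorem exists_parseTree_yield_eq (hG : IsCNF G) {v : Fin m → ℕ} (hv : v ∈ parikhImage G.language)
    (hv0 : v ≠ 0) : ∃ t : ParseTree G G.initial, t.yield = v := by
  obtain ⟨w, hw, rfl⟩ := hv
  have hmem := formYields_subset_of_derives hG hw (parikh_mem_formYields w)
  rw [formYields_singleton] at hmem
  exact hmem.resolve_right fun h ↦ hv0 h.1

theorem ParseTree.exists_derives {A : G.NT} (t : ParseTree G A) :
    ∃ w : List (Fin m), parikh w = t.yield ∧ G.Derives [.nonterminal A] (w.map .terminal) := by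
  induction t with
  | @leaf A a h =>
    exact ⟨[a], parikh_singleton a,
      ContextFreeGrammar.Produces.single ⟨_, h, ContextFreeRule.Rewrites.input_output⟩⟩
  | @node A B C h l r ihl ihr =>
    obtain ⟨u, hu, hBu⟩ := ihl
    obtain ⟨v, hv, hCv⟩ := ihr
    refine ⟨u ++ v, by rw [parikh_append, hu, hv, yield], ?_⟩
    have hrule : G.Derives [.nonterminal A] [.nonterminal B, .nonterminal C] :=
      ContextFreeGrammar.Produces.single ⟨_, h, ContextFreeRule.Rewrites.input_output⟩
    rw [List.map_append]
    exact hrule.trans ((hBu.append_right [.nonterminal C]).trans (hCv.append_left _))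

theorem ParseTree.yield_mem_parikhImage (t : ParseTree G G.initial) :
    t.yield ∈ parikhImage G.language := by
  obtain ⟨w, hw, hder⟩ := t.exists_derives
  exact ⟨w, hder, hw⟩

variable [Fintype G.NT]

theorem exists_hasLinearCover_pumpPeriods (hG : IsCNF G) {v : Fin m → ℕ}
    (hv : v ∈ parikhImage G.language) (hv0 : v ≠ 0) :
    ∃ V : Finset G.NT, HasLinearCover (parikhImage G.language) (pumpPeriods G V)
      (2 ^ (Fintype.card G.NT * Fintype.card G.NT + Fintype.card G.NT)) v := by
  classical
  obtain ⟨t, rfl⟩ := exists_parseTree_yield_eq hG hv hv0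
  obtain ⟨t', hvars, hdeg, hx⟩ := t.exists_yield_eq_add_pumps
  refine ⟨t.vars, t'.yield, hdeg, hx, fun y hy ↦ ?_⟩
  obtain ⟨s, hs⟩ := t'.exists_yield_add_pumps hvars.ge hy
  exact hs ▸ s.yield_mem_parikhImage

end Grammar

section Reachable

theorem exists_dfa_card_le.{u, v} {α : Type u} {σ : Type v} (M : DFA α σ) (F : Finset σ)
    (hF : ∀ w, M.eval w ∈ F) :
    ∃ (τ : Type u) (_ : Fintype τ) (M' : DFA α τ),
      Fintype.card τ ≤ F.card ∧ M'.accepts = M.accepts := by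
  classical
  have hrange : Set.range M.accepts.leftQuotient ⊆ F.image M.acceptsFrom := by
    rintro _ ⟨w, rfl⟩
    rw [Language.leftQuotient_accepts_apply]
    exact Finset.mem_coe.mpr (Finset.mem_image_of_mem _ (hF w))
  let := ((Finset.finite_toSet _).subset hrange).fintype
  refine ⟨_, this, M.accepts.toDFA, ?_, Language.accepts_toDFA _⟩
  rw [← Set.toFinset_card]
  exact (Finset.card_le_card (Set.toFinset_subset.mpr hrange)).trans Finset.card_image_le

end Reachable

section BlockScheme

variable {m : ℕ} {σ : Type*}

/-- The parameters of an automaton that first computes a piece of advice by a left fold over a head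
of the input and then reads the rest of the input in blocks whose length and whose admissible
Parikh vectors depend on the advice. -/
structure BlockScheme (m : ℕ) (σ : Type*) where
  start : σ
  next : σ → Fin m → σ
  blockLength : σ → ℕ
  period : σ → Set (Fin m → ℕ)
  blockLength_pos (s : σ) : 0 < blockLength s
  degree_period (s : σ) : ∀ β ∈ period s, degree β = blockLength s

namespace BlockScheme

variable (𝒜 : BlockScheme m σ) (N : ℕ) (S : Set (Fin m → ℕ))

/-- The advice computed from the word `w`. -/
def advice (w : List (Fin m)) : σ := w.foldl 𝒜.next 𝒜.start

theorem advice_append_singleton (w : List (Fin m)) (a : Fin m) :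
    𝒜.advice (w ++ [a]) = 𝒜.next (𝒜.advice w) a := by
  simp [advice]

open Classical in
/-- The automaton of a block scheme with heads of length `N`. A state `(s, x, y)` consists of the
advice `s` computed so far, the Parikh vector `x` of the head and the Parikh vector `y` of the
current block; completed blocks are forgotten. A word is accepted if its Parikh vector lies in `S`
and, once the head has been read, continues to do so whichever blocks are inserted. -/
noncomputable def dfa : DFA (Fin m) (Option (σ × (Fin m → ℕ) × (Fin m → ℕ))) where
  start := some (𝒜.start, 0, 0)
  step
    | none, _ => none
    | some (s, x, y), a =>
      if degree x < N then some (𝒜.next s a, x + Pi.single a 1, 0)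
      else if degree (y + Pi.single a 1) < 𝒜.blockLength s then some (s, x, y + Pi.single a 1)
      else if y + Pi.single a 1 ∈ 𝒜.period s then some (s, x, 0)
      else none
  accept := {t | ∃ s x y, t = some (s, x, y) ∧ x + y ∈ S ∧
    (N ≤ degree x → ∀ z ∈ AddSubmonoid.closure (𝒜.period s), x + y + z ∈ S)}

variable {N S}

theorem dfa_step_eq_some_iff {s s' : σ} {x x' y y' : Fin m → ℕ} {a : Fin m} :
    (𝒜.dfa N S).step (some (s, x, y)) a = some (s', x', y') ↔
      (degree x < N ∧ 𝒜.next s a = s' ∧ x + Pi.single a 1 = x' ∧ 0 = y') ∨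
      (N ≤ degree x ∧ s = s' ∧ x = x' ∧
        (degree (y + Pi.single a 1) < 𝒜.blockLength s ∧ y + Pi.single a 1 = y' ∨
          y + Pi.single a 1 ∈ 𝒜.period s ∧ 0 = y')) := by
  have hperiod := 𝒜.degree_period s (y + Pi.single a 1)
  simp only [dfa]
  grind

theorem eval_dfa_eq_some {w : List (Fin m)} {s : σ} {x y : Fin m → ℕ}
    (h : (𝒜.dfa N S).eval w = some (s, x, y)) :
    𝒜.advice (w.take N) = s ∧ parikh (w.take N) = x ∧ degree y < 𝒜.blockLength s ∧
      ∃ z ∈ AddSubmonoid.closure (𝒜.period s), parikh (w.drop N) = y + z := by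
  induction w using List.reverseRecOn generalizing s x y with
  | nil =>
    obtain ⟨rfl, rfl, rfl⟩ : 𝒜.start = s ∧ 0 = x ∧ 0 = y := by simpa [dfa] using h
    rw [List.take_nil, List.drop_nil, map_zero]
    exact ⟨rfl, rfl, 𝒜.blockLength_pos _, 0, zero_mem _, rfl⟩
  | append_singleton w a ih =>
    rw [DFA.eval_append_singleton] at h
    rcases hw : (𝒜.dfa N S).eval w with _ | ⟨s', x', y'⟩
    · rw [hw] at h
      exact absurd h (by simp [dfa])
    rw [hw] at h
    obtain ⟨rfl, rfl, hy, z, hz, hdrop⟩ := ih hw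
    rw [dfa_step_eq_some_iff, degree_parikh, List.length_take] at h
    rcases h with ⟨hlt, rfl, rfl, rfl⟩ | ⟨hle, rfl, rfl, h⟩
    · have hwN : w.length < N := by omega
      rw [List.take_of_length_le hwN.le, List.take_of_length_le (by simpa using hwN),
        List.drop_of_length_le (by simpa using hwN), parikh_append, parikh_singleton, map_zero,
        advice_append_singleton]
      exact ⟨rfl, rfl, 𝒜.blockLength_pos _, 0, zero_mem _, rfl⟩
    · have hwN : N ≤ w.length := by omega
      rw [List.take_append_of_le_length hwN, List.drop_append_of_le_length hwN, parikh_append,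
        parikh_singleton, hdrop]
      refine ⟨rfl, rfl, ?_⟩
      rcases h with ⟨hlt, rfl⟩ | ⟨hmem, rfl⟩
      · exact ⟨hlt, z, hz, add_right_comm _ _ _⟩
      · exact ⟨by simpa using 𝒜.blockLength_pos _, z + (y' + Pi.single a 1),
          add_mem hz (AddSubmonoid.subset_closure hmem), by abel⟩

theorem eval_dfa_of_length_le {w : List (Fin m)} (hw : w.length ≤ N) :
    (𝒜.dfa N S).eval w = some (𝒜.advice w, parikh w, 0) := by
  induction w using List.reverseRecOn with
  | nil => rfl
  | append_singleton w a ih =>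
    rw [List.length_append, List.length_singleton] at hw
    rw [DFA.eval_append_singleton, ih (by omega), dfa_step_eq_some_iff, degree_parikh,
      advice_append_singleton, parikh_append, parikh_singleton]
    exact .inl ⟨hw, rfl, rfl, rfl⟩

theorem evalFrom_dfa_of_degree_lt {s : σ} {x : Fin m → ℕ} (hx : N ≤ degree x) {w : List (Fin m)}
    (hw : degree (parikh w) < 𝒜.blockLength s) :
    (𝒜.dfa N S).evalFrom (some (s, x, 0)) w = some (s, x, parikh w) := by
  induction w using List.reverseRecOn with
  | nil => rfl
  | append_singleton w a ih =>
    rw [parikh_append, parikh_singleton] at hw ⊢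
    rw [DFA.evalFrom_append_singleton, ih ((degree_mono le_self_add).trans_lt hw),
      dfa_step_eq_some_iff]
    exact .inr ⟨hx, rfl, rfl, .inl ⟨hw, rfl⟩⟩

theorem evalFrom_dfa_of_mem_period {s : σ} {x : Fin m → ℕ} (hx : N ≤ degree x) {w : List (Fin m)}
    (hw : parikh w ∈ 𝒜.period s) :
    (𝒜.dfa N S).evalFrom (some (s, x, 0)) w = some (s, x, 0) := by
  have hdeg := 𝒜.degree_period s _ hw
  rcases List.eq_nil_or_concat' w with rfl | ⟨w, a, rfl⟩
  · rfl
  rw [parikh_append, parikh_singleton] at hw hdeg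
  have hlt : degree (parikh w) < 𝒜.blockLength s := by
    rw [← hdeg, map_add, degree_single]
    exact Nat.lt_succ_self _
  rw [DFA.evalFrom_append_singleton, 𝒜.evalFrom_dfa_of_degree_lt hx hlt, dfa_step_eq_some_iff]
  exact .inr ⟨hx, rfl, rfl, .inr ⟨hw, rfl⟩⟩

theorem exists_evalFrom_dfa_eq_self {s : σ} {x : Fin m → ℕ} (hx : N ≤ degree x) {z : Fin m → ℕ}
    (hz : z ∈ AddSubmonoid.closure (𝒜.period s)) :
    ∃ w, parikh w = z ∧ (𝒜.dfa N S).evalFrom (some (s, x, 0)) w = some (s, x, 0) := by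
  induction hz using AddSubmonoid.closure_induction with
  | zero => exact ⟨[], rfl, rfl⟩
  | add z₁ z₂ _ _ h₁ h₂ =>
    obtain ⟨w₁, rfl, h₁⟩ := h₁
    obtain ⟨w₂, rfl, h₂⟩ := h₂
    exact ⟨w₁ ++ w₂, parikh_append _ _, by rw [DFA.evalFrom_of_append, h₁, h₂]⟩
  | mem β hβ =>
    obtain ⟨w, rfl⟩ := exists_parikh_eq β
    exact ⟨w, rfl, 𝒜.evalFrom_dfa_of_mem_period hx hβ⟩

theorem parikh_mem_of_mem_accepts_dfa {w : List (Fin m)} (hw : w ∈ (𝒜.dfa N S).accepts) :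
    parikh w ∈ S := by
  obtain ⟨s, x, y, heval, hS, hclosure⟩ := hw
  obtain ⟨rfl, rfl, -, z, hz, hdrop⟩ := 𝒜.eval_dfa_eq_some heval
  have hsplit : parikh w = parikh (w.take N) + y + z := by
    rw [add_assoc, ← hdrop, ← parikh_append, List.take_append_drop]
  rcases le_or_gt N w.length with hN | hN
  · exact hsplit ▸ hclosure (by rw [degree_parikh, List.length_take, min_eq_left hN]) z hz
  · obtain rfl : z = 0 := by
      rw [List.drop_of_length_le hN.le] at hdrop
      exact (add_eq_zero.mp hdrop.symm).2
    rwa [hsplit, add_zero]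

theorem exists_mem_accepts_dfa {w : List (Fin m)} (hw : w.length = N) {r z : Fin m → ℕ}
    (hr : degree r < 𝒜.blockLength (𝒜.advice w))
    (hz : z ∈ AddSubmonoid.closure (𝒜.period (𝒜.advice w)))
    (hS : ∀ z ∈ AddSubmonoid.closure (𝒜.period (𝒜.advice w)), parikh w + r + z ∈ S) :
    ∃ w' ∈ (𝒜.dfa N S).accepts, parikh w' = parikh w + r + z := by
  have hN : N ≤ degree (parikh w) := by rw [degree_parikh, hw]
  obtain ⟨wz, rfl, hwz⟩ := 𝒜.exists_evalFrom_dfa_eq_self (S := S) hN hz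
  obtain ⟨wr, rfl⟩ := exists_parikh_eq r
  refine ⟨w ++ wz ++ wr, ?_, by simp only [parikh_append, add_right_comm]⟩
  have heval : (𝒜.dfa N S).eval (w ++ wz ++ wr) = some (𝒜.advice w, parikh w, parikh wr) := by
    rw [DFA.eval, DFA.evalFrom_of_append, DFA.evalFrom_of_append, ← DFA.eval,
      𝒜.eval_dfa_of_length_le hw.le, hwz, 𝒜.evalFrom_dfa_of_degree_lt hN hr]
  exact ⟨_, _, _, heval, by simpa using hS 0 (zero_mem _), fun _ ↦ hS⟩

theorem exists_head {B : ℕ} {v : Fin m → ℕ} {s : σ} {w₀ : List (Fin m)}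
    (hcover : HasLinearCover S (𝒜.period s) B v) (hw₀ : parikh w₀ ≤ v)
    (hN : B + w₀.length * 𝒜.blockLength s ≤ N) (hv : N ≤ degree v)
    (hs : ∀ w, (w₀ ++ w).length = N → parikh (w₀ ++ w) ≤ v → 𝒜.advice (w₀ ++ w) = s) :
    ∃ (w : List (Fin m)) (r : Fin m → ℕ), w.length = N ∧ degree r < 𝒜.blockLength (𝒜.advice w) ∧
      (∃ z ∈ AddSubmonoid.closure (𝒜.period (𝒜.advice w)), v = parikh w + r + z) ∧
      ∀ z ∈ AddSubmonoid.closure (𝒜.period (𝒜.advice w)), parikh w + r + z ∈ S := by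
  obtain ⟨b, hb, hNb, hlt, ⟨z, hz, rfl⟩, hS⟩ :=
    hcover.exists_base (fun β hβ ↦ (𝒜.degree_period s β hβ).le) (𝒜.blockLength_pos s) hw₀
      (by rwa [degree_parikh]) hv
  have hlength : w₀.length ≤ N :=
    (Nat.le_mul_of_pos_right _ (𝒜.blockLength_pos s)).trans ((Nat.le_add_left _ _).trans hN)
  obtain ⟨w, r, hw, rfl⟩ := exists_parikh_append_add_eq hb hlength hNb
  obtain rfl := hs w hw (le_self_add.trans le_self_add)
  refine ⟨w₀ ++ w, r, hw, ?_, ⟨z, hz, rfl⟩, hS⟩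
  rwa [map_add, degree_parikh, hw, Nat.add_lt_add_iff_left] at hlt

theorem parikhImage_accepts_dfa {B : ℕ}
    (h : ∀ v ∈ S, N ≤ degree v → ∃ (s : σ) (w₀ : List (Fin m)),
      HasLinearCover S (𝒜.period s) B v ∧ parikh w₀ ≤ v ∧ B + w₀.length * 𝒜.blockLength s ≤ N ∧
      ∀ w, (w₀ ++ w).length = N → parikh (w₀ ++ w) ≤ v → 𝒜.advice (w₀ ++ w) = s) :
    parikhImage (𝒜.dfa N S).accepts = S := by
  refine Set.Subset.antisymm ?_ fun v hv ↦ ?_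
  · rintro _ ⟨w, hw, rfl⟩
    exact 𝒜.parikh_mem_of_mem_accepts_dfa hw
  rcases le_or_gt N (degree v) with hN | hN
  · obtain ⟨s, w₀, hcover, hw₀, hB, hs⟩ := h v hv hN
    obtain ⟨w, r, hw, hr, ⟨z, hz, rfl⟩, hS⟩ := 𝒜.exists_head hcover hw₀ hB hN hs
    exact 𝒜.exists_mem_accepts_dfa hw hr hz hS
  · obtain ⟨w, rfl⟩ := exists_parikh_eq v
    rw [degree_parikh] at hN
    refine ⟨w, ⟨_, _, _, 𝒜.eval_dfa_of_length_le hN.le, by rwa [add_zero], fun h ↦ ?_⟩, rfl⟩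
    exact absurd h (by rwa [degree_parikh, not_le])

theorem exists_dfa_accepts_eq (S : Set (Fin m → ℕ)) {M : ℕ} (hM : ∀ s, 𝒜.blockLength s ≤ M)
    {A : Finset σ} (hA : ∀ w : List (Fin m), w.length ≤ N → 𝒜.advice w ∈ A) :
    ∃ (τ : Type) (_ : Fintype τ) (M' : DFA (Fin m) τ),
      Fintype.card τ ≤ A.card * ((N + 1) ^ m * (M + 1) ^ m) + 1 ∧
      M'.accepts = (𝒜.dfa N S).accepts := by
  classical
  have hcard : (A ×ˢ degreeLE (Fin m) N ×ˢ degreeLE (Fin m) M).insertNone.card ≤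
      A.card * ((N + 1) ^ m * (M + 1) ^ m) + 1 := by
    rw [Finset.card_insertNone, Finset.card_product, Finset.card_product]
    gcongr <;> simpa using card_degreeLE_le (ι := Fin m) _
  suffices ∀ w, (𝒜.dfa N S).eval w ∈ (A ×ˢ degreeLE (Fin m) N ×ˢ degreeLE (Fin m) M).insertNone by
    obtain ⟨τ, fτ, M', hM', haccepts⟩ := exists_dfa_card_le _ _ this
    exact ⟨τ, fτ, M', hM'.trans hcard, haccepts⟩
  intro w
  rcases hw : (𝒜.dfa N S).eval w with _ | ⟨s, x, y⟩
  · exact Finset.none_mem_insertNone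
  · obtain ⟨rfl, rfl, hy, -⟩ := 𝒜.eval_dfa_eq_some hw
    simp only [Finset.some_mem_insertNone, Finset.mem_product, mem_degreeLE, degree_parikh]
    exact ⟨hA _ (List.length_take_le _ _), List.length_take_le _ _, hy.le.trans (hM _)⟩

end BlockScheme

end BlockScheme

section Enumeration

theorem exists_seq_of_card_le {α : Type*} [DecidableEq α] (a₀ : α) {s : Finset α} {K : ℕ}
    (hK : s.card ≤ K) : ∃ e : ℕ → α, (∀ k, e k ∈ insert a₀ s) ∧ ∀ a ∈ s, ∃ k < K, e k = a := by
  refine ⟨fun k ↦ s.toList.getD k a₀, fun k ↦ ?_, fun a ha ↦ ?_⟩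
  · change s.toList.getD k a₀ ∈ insert a₀ s
    rcases lt_or_ge k s.toList.length with h | h
    · rw [List.getD_eq_getElem _ _ h]
      exact Finset.mem_insert_of_mem (Finset.mem_toList.mp (List.getElem_mem h))
    · rw [List.getD_eq_default _ _ h]
      exact Finset.mem_insert_self _ _
  · obtain ⟨k, hk, rfl⟩ := List.mem_iff_getElem.mp (Finset.mem_toList.mpr ha)
    exact ⟨k, hk.trans_le (by rwa [Finset.length_toList]), List.getD_eq_getElem _ _ hk⟩

theorem exists_erase_zero_image_eq {M : Type*} [Zero M] [DecidableEq M] {F : Finset M} {R : ℕ}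
    (hF : F.card ≤ R) (h0 : 0 ∉ F) :
    ∃ f : Fin R → M, (∀ i, f i ∈ insert 0 F) ∧ (Finset.univ.image f).erase 0 = F := by
  obtain ⟨f, hf, hFf⟩ := exists_seq_of_card_le 0 hF
  refine ⟨fun i ↦ f i, fun i ↦ hf i, ?_⟩
  ext β
  simp only [Finset.mem_erase, Finset.mem_image, Finset.mem_univ, true_and]
  constructor
  · rintro ⟨h0, i, rfl⟩
    exact (Finset.mem_insert.mp (hf i)).resolve_left h0
  · intro hβ
    obtain ⟨i, hi, rfl⟩ := hFf β hβ
    exact ⟨ne_of_mem_of_not_mem hβ h0, ⟨i, hi⟩, rfl⟩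

theorem exists_seq_finset_degree_le (ι : Type*) [Fintype ι] (D R : ℕ) :
    ∃ e : ℕ → Finset (ι → ℕ),
      (∀ k, (e k).card ≤ R ∧ ∀ β ∈ e k, degree β ≤ D ∧ β ≠ 0) ∧
      ∀ F : Finset (ι → ℕ), F.card ≤ R → (∀ β ∈ F, degree β ≤ D ∧ β ≠ 0) →
        ∃ k < ((D + 1) ^ Fintype.card ι) ^ R, e k = F := by
  classical
  let s : Finset (Finset (ι → ℕ)) :=
    (Fintype.piFinset fun _ : Fin R ↦ degreeLE ι D).image fun f ↦ (Finset.univ.image f).erase 0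
  have hcard : s.card ≤ ((D + 1) ^ Fintype.card ι) ^ R := by
    refine Finset.card_image_le.trans ?_
    rw [Fintype.card_piFinset_const]
    exact Nat.pow_le_pow_left (card_degreeLE_le D) R
  obtain ⟨e, hes, he⟩ := exists_seq_of_card_le ∅ hcard
  refine ⟨e, fun k ↦ ?_, fun F hF hFD ↦ he F ?_⟩
  · rcases Finset.mem_insert.mp (hes k) with hek | hek
    · simp [hek]
    obtain ⟨f, hf, hfe⟩ := Finset.mem_image.mp hek
    rw [← hfe]
    refine ⟨(Finset.card_erase_le.trans Finset.card_image_le).trans_eq (Finset.card_fin R), ?_⟩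
    intro β hβ
    obtain ⟨hβ0, hβ⟩ := Finset.mem_erase.mp hβ
    obtain ⟨i, -, rfl⟩ := Finset.mem_image.mp hβ
    exact ⟨mem_degreeLE.mp (Fintype.mem_piFinset.mp hf i), hβ0⟩
  · obtain ⟨f, hf, hfF⟩ := exists_erase_zero_image_eq hF fun h ↦ (hFD 0 h).2 rfl
    refine Finset.mem_image.mpr ⟨f, Fintype.mem_piFinset.mpr fun i ↦ mem_degreeLE.mpr ?_, hfF⟩
    rcases Finset.mem_insert.mp (hf i) with h | h
    · simp [h]
    · exact (hFD _ h).1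

end Enumeration

section RunAdvice

/-- The information about the first run of a word, that is, its longest prefix consisting of copies
of a single letter. The natural number is one less than the length of the run. -/
inductive RunState (α : Type*)
  | start
  | run (a : α) (k : ℕ)
  | ended (k : ℕ)

namespace RunState

variable {α : Type*}

open Classical in
/-- The information about the first run after one more letter has been read. -/
noncomputable def next : RunState α → α → RunState α
  | start, a => run a 0
  | run b k, a => if a = b then run b (k + 1) else ended k
  | ended k, _ => ended k

/-- The information about the first run of `w`. -/
noncomputable def ofWord (w : List α) : RunState α := w.foldl next start

theorem ofWord_replicate (k : ℕ) (a : α) : ofWord (List.replicate (k + 1) a) = run a k := by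
  induction k with
  | zero => rfl
  | succ k ih => rw [List.replicate_succ', ofWord, List.foldl_append, ← ofWord, ih]; simp [next]

theorem ofWord_replicate_append {a b : α} (hab : b ≠ a) (k : ℕ) (w : List α) :
    ofWord (List.replicate (k + 1) a ++ [b] ++ w) = ended k := by
  rw [ofWord, List.foldl_append, List.foldl_append, ← ofWord, ofWord_replicate]
  simp only [List.foldl_cons, List.foldl_nil, next, if_neg hab]
  exact List.foldl_fixed' (fun _ ↦ rfl) w

open Classical in
/-- The possible first runs of words of length at most `n`. -/
noncomputable def ofLengthLE (α : Type*) [Fintype α] (n : ℕ) : Finset (RunState α) :=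
  insert start ((Finset.univ ×ˢ Finset.range n).image (fun p ↦ run p.1 p.2) ∪
    (Finset.range n).image ended)

theorem card_ofLengthLE_le [Fintype α] (n : ℕ) :
    (ofLengthLE α n).card ≤ (Fintype.card α + 1) * n + 1 := by
  classical
  refine (Finset.card_insert_le _ _).trans (Nat.succ_le_succ ((Finset.card_union_le _ _).trans ?_))
  rw [add_one_mul]
  refine add_le_add (Finset.card_image_le.trans_eq ?_) (Finset.card_image_le.trans_eq ?_)
  · simp
  · simp

theorem start_mem_ofLengthLE [Fintype α] {n : ℕ} : start ∈ ofLengthLE α n := by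
  simp [ofLengthLE]

theorem run_mem_ofLengthLE [Fintype α] {a : α} {k n : ℕ} : run a k ∈ ofLengthLE α n ↔ k < n := by
  simp [ofLengthLE]

theorem ended_mem_ofLengthLE [Fintype α] {k n : ℕ} : ended k ∈ ofLengthLE α n ↔ k < n := by
  simp [ofLengthLE]

theorem ofWord_mem_ofLengthLE [Fintype α] {w : List α} {n : ℕ} (hw : w.length ≤ n) :
    ofWord w ∈ ofLengthLE α n := by
  classical
  induction w using List.reverseRecOn generalizing n with
  | nil => exact start_mem_ofLengthLE
  | append_singleton w a ih =>
    rw [List.length_append, List.length_singleton] at hw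
    have hmem := ih le_rfl
    rw [ofWord, List.foldl_append, ← ofWord, List.foldl_cons, List.foldl_nil]
    generalize ofWord w = s at hmem ⊢
    rcases s with _ | ⟨b, k⟩ | k
    · exact run_mem_ofLengthLE.mpr ((Nat.succ_pos _).trans_le hw)
    · have hk := run_mem_ofLengthLE.mp hmem
      rw [next]
      split_ifs
      · exact run_mem_ofLengthLE.mpr (by omega)
      · exact ended_mem_ofLengthLE.mpr (by omega)
    · exact ended_mem_ofLengthLE.mpr ((ended_mem_ofLengthLE.mp hmem).trans hw)

end RunState

end RunAdvice

section RunScheme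

variable {m : ℕ}

theorem exists_lt_apply_of_lt_degree {ι : Type*} [Fintype ι] {v : ι → ℕ} {K : ℕ}
    (h : Fintype.card ι * K < degree v) : ∃ i, K < v i := by
  obtain ⟨i, -, hi⟩ := Finset.exists_lt_of_sum_lt (s := Finset.univ) (f := fun _ ↦ K) (g := v)
    (by simpa [degree_apply] using h)
  exact ⟨i, hi⟩

theorem eq_replicate_of_parikh_le_single {w : List (Fin m)} {j : Fin m} {n : ℕ}
    (hw : parikh w ≤ Pi.single j n) : w = List.replicate w.length j := by
  refine List.eq_replicate_iff.mpr ⟨rfl, fun i hi ↦ ?_⟩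
  by_contra hij
  have hle := hw i
  rw [Pi.single_eq_of_ne hij] at hle
  exact hle.not_gt (List.count_pos_iff.mpr hi)

theorem exists_ne_parikh_le {v : Fin m → ℕ} {j : Fin m} (hv : v ≠ Pi.single j (v j)) {n : ℕ}
    (hn : n ≤ v j) : ∃ l ≠ j, parikh (List.replicate n j ++ [l]) ≤ v := by
  obtain ⟨l, hl⟩ := Function.ne_iff.mp hv
  have hlj : l ≠ j := by
    rintro rfl
    simp at hl
  rw [Pi.single_eq_of_ne hlj] at hl
  refine ⟨l, hlj, fun i ↦ ?_⟩
  rw [parikh_append, parikh_replicate, parikh_singleton]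
  simp only [Pi.add_apply, Pi.single_apply]
  grind

/-- The block scheme whose advice is the first run of the head: as long as the head is a power of
the letter `j`, the period is `p j` times the letter `j`; once a run of length `k + 1` has ended,
its length selects the finset `e k`. -/
noncomputable def runScheme (p : Fin m → ℕ) (e : ℕ → Finset (Fin m → ℕ)) (hp : ∀ j, 0 < p j)
    (he : ∀ k, ∀ β ∈ e k, β ≠ 0) : BlockScheme m (RunState (Fin m)) where
  start := .start
  next := .next
  blockLength
    | .start => 1
    | .run j _ => p j
    | .ended k => ∏ β ∈ e k, degree β
  period
    | .start => ∅
    | .run j _ => {Pi.single j (p j)}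
    | .ended k => homogenization (e k)
  blockLength_pos
    | .start => one_pos
    | .run j _ => hp j
    | .ended k => Finset.prod_pos fun β hβ ↦ degree_pos.mpr (he k β hβ)
  degree_period
    | .start => fun _ h ↦ absurd h (Set.notMem_empty _)
    | .run j _ => fun _ h ↦ h ▸ degree_single j (p j)
    | .ended _ => fun _ ↦ degree_of_mem_homogenization

variable {S : Set (Fin m → ℕ)} {p : Fin m → ℕ} {e : ℕ → Finset (Fin m → ℕ)} {B K M N : ℕ}

theorem runScheme_advice (hp : ∀ j, 0 < p j) (he : ∀ k, ∀ β ∈ e k, β ≠ 0) :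
    (runScheme p e hp he).advice = RunState.ofWord :=
  rfl

theorem parikhImage_accepts_dfa_runScheme (hp : ∀ j, 0 < p j) (he : ∀ k, ∀ β ∈ e k, β ≠ 0)
    (heM : ∀ k, ∏ β ∈ e k, degree β ≤ M)
    (hsingle : ∀ j n, B < n → Pi.single j n ∈ S →
      HasLinearCover S {Pi.single j (p j)} B (Pi.single j n))
    (hS : ∀ v ∈ S, B < degree v → ∃ k < K, HasLinearCover S (homogenization (e k)) B v)
    (hBN : B + (K + 1) * M < N) (hKN : m * K < N) :
    parikhImage ((runScheme p e hp he).dfa N S).accepts = S := by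
  refine (runScheme p e hp he).parikhImage_accepts_dfa (B := B) fun v hv hN ↦ ?_
  have hBlt : B < N := (Nat.le_add_right _ _).trans_lt hBN
  obtain ⟨j, hj⟩ := exists_lt_apply_of_lt_degree (v := v) (by simpa using hKN.trans_le hN)
  by_cases hvj : v = Pi.single j (v j)
  · rw [hvj] at hv hN ⊢
    rw [degree_single] at hN
    refine ⟨.run j (N - 1), [], hsingle j _ (hBlt.trans_le hN) hv, zero_le, ?_, fun w hw hwv ↦ ?_⟩
    · simpa using hBlt.le
    · rw [eq_replicate_of_parikh_le_single hwv, hw, runScheme_advice,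
        ← RunState.ofWord_replicate, Nat.sub_add_cancel (Nat.zero_lt_of_lt hBlt)]
  · obtain ⟨k, hk, hcover⟩ := hS v hv (hBlt.trans_le hN)
    obtain ⟨l, hlj, hlv⟩ := exists_ne_parikh_le hvj (n := k + 1) (by omega)
    refine ⟨.ended k, _, hcover, hlv, ?_, fun w _ _ ↦ RunState.ofWord_replicate_append hlj k w⟩
    rw [List.length_append, List.length_replicate, List.length_singleton]
    calc B + (k + 1 + 1) * ∏ β ∈ e k, degree β ≤ B + (K + 1) * M := by gcongr; exacts [hk, heM k]
      _ ≤ N := hBN.le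

theorem exists_dfa_of_hasLinearCover (hM : 1 ≤ M) (hp : ∀ j, 0 < p j ∧ p j ≤ M)
    (he : ∀ k, (∀ β ∈ e k, β ≠ 0) ∧ ∏ β ∈ e k, degree β ≤ M)
    (hsingle : ∀ j n, B < n → Pi.single j n ∈ S →
      HasLinearCover S {Pi.single j (p j)} B (Pi.single j n))
    (hS : ∀ v ∈ S, B < degree v → ∃ k < K, HasLinearCover S (homogenization (e k)) B v)
    (hBN : B + (K + 1) * M < N) (hKN : m * K < N) :
    ∃ (τ : Type) (_ : Fintype τ) (A : DFA (Fin m) τ),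
      Fintype.card τ ≤ ((m + 1) * N + 1) * ((N + 1) ^ m * (M + 1) ^ m) + 1 ∧
      parikhImage A.accepts = S := by
  let 𝒜 := runScheme p e (fun j ↦ (hp j).1) fun k ↦ (he k).1
  have hblock : ∀ s, 𝒜.blockLength s ≤ M
    | .start => hM
    | .run j _ => (hp j).2
    | .ended k => (he k).2
  obtain ⟨τ, fτ, A, hcard, hA⟩ := 𝒜.exists_dfa_accepts_eq S hblock
    (A := RunState.ofLengthLE (Fin m) N) fun _ ↦ RunState.ofWord_mem_ofLengthLE
  refine ⟨τ, fτ, A, hcard.trans ?_, ?_⟩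
  · gcongr
    simpa using RunState.card_ofLengthLE_le (α := Fin m) N
  · rw [hA]
    exact parikhImage_accepts_dfa_runScheme _ _ (fun k ↦ (he k).2) hsingle
      hS hBN hKN

end RunScheme

section Bounds

/-- The bound on the degrees of the periods for a grammar with `h` variables. -/
def maxPeriod (h : ℕ) : ℕ := 2 ^ (2 * h + 1)

/-- The bound on the number of periods needed to represent one vector, for a grammar with `h`
variables over `m` letters. -/
def maxPeriodCount (m h : ℕ) : ℕ := 2 ^ (2 * m + 4) * h

/-- The bound on the common degree of the periods after homogenization. -/
def maxBlock (m h : ℕ) : ℕ := maxPeriod h ^ maxPeriodCount m h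

/-- The bound on the degrees of the bases of the linear sets. -/
def maxBase (m h : ℕ) : ℕ := 2 ^ (h * h + h) + maxPeriodCount m h * maxBlock m h

/-- The number of indices in an enumeration of the possible sets of periods. -/
def numPeriodSets (m h : ℕ) : ℕ := ((maxPeriod h + 1) ^ m) ^ maxPeriodCount m h

/-- The length of the prefix in which the automaton identifies a set of periods. -/
def maxHead (m h : ℕ) : ℕ :=
  maxBase m h + (numPeriodSets m h + 1) * maxBlock m h + m * numPeriodSets m h + 1

/-- The number of states of the automaton. -/
def stateBound (m h : ℕ) : ℕ :=
  ((m + 1) * maxHead m h + 1) * ((maxHead m h + 1) ^ m * (maxBlock m h + 1) ^ m) + 1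

theorem one_le_maxPeriod (h : ℕ) : 1 ≤ maxPeriod h := Nat.one_le_two_pow

theorem lt_maxPeriodCount (m : ℕ) {h : ℕ} (hh : 1 ≤ h) : h < maxPeriodCount m h :=
  lt_mul_of_one_lt_left hh (Nat.one_lt_two_pow (by omega))

theorem mul_two_mul_add_lt_two_pow (m : ℕ) : m * (2 * m + 8) < 2 ^ (2 * m + 4) := by
  have hm : m < 2 ^ m := Nat.lt_two_pow_self
  calc m * (2 * m + 8) < 2 ^ m * (2 ^ m * 16) := Nat.mul_lt_mul'' hm (by omega)
    _ = 2 ^ (2 * m + 4) := by ring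

theorem maxPeriodCount_mul_maxPeriod_add_one_le (m h : ℕ) :
    maxPeriodCount m h * maxPeriod h + 1 ≤ 2 ^ (2 * m + 3 * h + 5) := by
  have hlt : maxPeriodCount m h * maxPeriod h < 2 ^ (2 * m + 4) * 2 ^ h * 2 ^ (2 * h + 1) := by
    unfold maxPeriodCount maxPeriod
    gcongr
    exact Nat.lt_two_pow_self
  exact hlt.trans_eq (by ring)

theorem pow_lt_two_pow_maxPeriodCount (m : ℕ) {h : ℕ} (hh : 1 ≤ h) :
    (maxPeriodCount m h * maxPeriod h + 1) ^ m < 2 ^ maxPeriodCount m h := by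
  calc (maxPeriodCount m h * maxPeriod h + 1) ^ m
      ≤ (2 ^ (2 * m + 3 * h + 5)) ^ m := by
        gcongr
        exact maxPeriodCount_mul_maxPeriod_add_one_le m h
    _ = 2 ^ (m * (2 * m + 3 * h + 5)) := by rw [← pow_mul, mul_comm]
    _ ≤ 2 ^ (m * (2 * m + 8) * h) := by
        rw [mul_assoc]
        gcongr
        · exact one_le_two
        · nlinarith
    _ < 2 ^ (2 ^ (2 * m + 4) * h) := by
        gcongr
        · exact one_lt_two
        · exact mul_two_mul_add_lt_two_pow m

theorem maxBase_add_lt_maxHead (m h : ℕ) :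
    maxBase m h + (numPeriodSets m h + 1) * maxBlock m h < maxHead m h := by
  unfold maxHead
  omega

theorem mul_numPeriodSets_lt_maxHead (m h : ℕ) : m * numPeriodSets m h < maxHead m h := by
  unfold maxHead
  omega

end Bounds

section GrammarCover

variable {m : ℕ} {G : ContextFreeGrammar (Fin m)} [Fintype G.NT]

theorem degree_le_of_mem_pumpPeriods {V : Finset G.NT} {β : Fin m → ℕ}
    (hβ : β ∈ pumpPeriods G V) : degree β ≤ maxPeriod (Fintype.card G.NT) := by
  obtain ⟨A, -, hA⟩ := Set.mem_iUnion₂.mp hβ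
  exact hA.1

theorem exists_hasLinearCover_homogenization (hG : IsCNF G) (hh : 1 ≤ Fintype.card G.NT)
    {v : Fin m → ℕ} (hv : v ∈ parikhImage G.language) (hv0 : v ≠ 0) :
    ∃ F : Finset (Fin m → ℕ), F.card ≤ maxPeriodCount m (Fintype.card G.NT) ∧
      (∀ β ∈ F, degree β ≤ maxPeriod (Fintype.card G.NT) ∧ β ≠ 0) ∧
      HasLinearCover (parikhImage G.language) (homogenization F)
        (maxBase m (Fintype.card G.NT)) v := by
  obtain ⟨V, hV⟩ := exists_hasLinearCover_pumpPeriods hG hv hv0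
  obtain ⟨F, hcard, hF, hcover⟩ := hV.exists_homogenization (one_le_maxPeriod _)
    (fun _ ↦ degree_le_of_mem_pumpPeriods)
    (by simpa using pow_lt_two_pow_maxPeriodCount m hh)
  exact ⟨F, hcard, fun β hβ ↦ ⟨degree_le_of_mem_pumpPeriods (hF β hβ).1, (hF β hβ).2⟩, hcover⟩

theorem exists_hasLinearCover_single (hG : IsCNF G) (hh : 1 ≤ Fintype.card G.NT) (j : Fin m) :
    ∃ p, 0 < p ∧ p ≤ maxBlock m (Fintype.card G.NT) ∧
      ∀ n, maxBase m (Fintype.card G.NT) < n → Pi.single j n ∈ parikhImage G.language →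
        HasLinearCover (parikhImage G.language) {Pi.single j p} (maxBase m (Fintype.card G.NT))
          (Pi.single j n) := by
  set h := Fintype.card G.NT
  have hD := one_le_maxPeriod h
  have hcount := lt_maxPeriodCount m hh
  obtain ⟨p, hp, hpD, hpmem⟩ := exists_common_single_multiple (pumpYields G (maxPeriod h)) hD
    (fun _ _ hβ ↦ hβ.1) j
  have hpblock : p * maxPeriod h ≤ maxBlock m h :=
    calc p * maxPeriod h ≤ maxPeriod h ^ (h + 1) := Nat.mul_le_mul_right _ hpD
      _ ≤ maxBlock m h := Nat.pow_le_pow_right hD hcount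
  refine ⟨p, hp, (Nat.le_mul_of_pos_right p hD).trans hpblock, fun n hn hS ↦ ?_⟩
  have hn0 : (Pi.single j n : Fin m → ℕ) ≠ 0 := degree_pos.mp (by rw [degree_single]; omega)
  obtain ⟨V, hV⟩ := exists_hasLinearCover_pumpPeriods hG hS hn0
  have hpclosure : ∀ a, 0 < a → Pi.single j a ∈ pumpPeriods G V →
      Pi.single j p ∈ AddSubmonoid.closure (pumpPeriods G V) := by
    intro a ha haV
    obtain ⟨A, hAV, hA⟩ := Set.mem_iUnion₂.mp haV
    exact AddSubmonoid.closure_mono (Set.subset_biUnion_of_mem hAV) (hpmem A a ha hA)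
  refine (hV.single (fun _ ↦ degree_le_of_mem_pumpPeriods)
    (by simpa using pow_lt_two_pow_maxPeriodCount m hh) ?_ hp hpclosure).mono ?_
  · exact (Nat.le_add_right _ _).trans_lt hn
  · exact Nat.add_le_add_left (Nat.mul_le_mul_left _ hpblock) _

theorem exists_dfa_card_le_stateBound (hG : IsCNF G) (hh : 1 ≤ Fintype.card G.NT) :
    ∃ (σ : Type) (_ : Fintype σ) (A : DFA (Fin m) σ),
      Fintype.card σ ≤ stateBound m (Fintype.card G.NT) ∧
      parikhImage A.accepts = parikhImage G.language := by
  set h := Fintype.card G.NT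
  choose p hp hpblock hsingle using exists_hasLinearCover_single hG hh
  obtain ⟨e, he, hsurj⟩ := exists_seq_finset_degree_le (Fin m) (maxPeriod h) (maxPeriodCount m h)
  have hprod : ∀ k, ∏ β ∈ e k, degree β ≤ maxBlock m h := fun k ↦
    (Finset.prod_le_pow_card _ _ _ fun β hβ ↦ ((he k).2 β hβ).1).trans
      (Nat.pow_le_pow_right (one_le_maxPeriod h) (he k).1)
  have hcover : ∀ v ∈ parikhImage G.language, maxBase m h < degree v →
      ∃ k < numPeriodSets m h,
        HasLinearCover (parikhImage G.language) (homogenization (e k)) (maxBase m h) v := by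
    intro v hv hdeg
    obtain ⟨F, hcard, hF, hFv⟩ := exists_hasLinearCover_homogenization hG hh hv
      (degree_pos.mp ((Nat.zero_le _).trans_lt hdeg))
    obtain ⟨k, hk, rfl⟩ := hsurj F hcard hF
    exact ⟨k, by simpa [numPeriodSets] using hk, hFv⟩
  exact exists_dfa_of_hasLinearCover (Nat.one_le_pow _ _ (one_le_maxPeriod h))
    (fun j ↦ ⟨hp j, hpblock j⟩) (fun k ↦ ⟨fun β hβ ↦ ((he k).2 β hβ).2, hprod k⟩) hsingle hcover
    (maxBase_add_lt_maxHead m h) (mul_numPeriodSets_lt_maxHead m h)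

end GrammarCover

section QuadraticExponent

/-- The function `f` is bounded on the positive integers by `2 ^ (C * h ^ 2)` for some constant
`C`. -/
def IsQuadExp (f : ℕ → ℕ) : Prop :=
  ∃ C, ∀ h, 1 ≤ h → f h ≤ 2 ^ (C * h ^ 2)

namespace IsQuadExp

variable {f g : ℕ → ℕ}

theorem mono (hg : IsQuadExp g) (hfg : ∀ h, 1 ≤ h → f h ≤ g h) : IsQuadExp f :=
  let ⟨C, hC⟩ := hg
  ⟨C, fun h hh ↦ (hfg h hh).trans (hC h hh)⟩

theorem two_pow {e : ℕ → ℕ} (c : ℕ) (he : ∀ h, 1 ≤ h → e h ≤ c * h ^ 2) :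
    IsQuadExp fun h ↦ 2 ^ e h :=
  ⟨c, fun h hh ↦ Nat.pow_le_pow_right two_pos (he h hh)⟩

theorem const (c : ℕ) : IsQuadExp fun _ ↦ c :=
  (two_pow c fun h hh ↦ Nat.le_mul_of_pos_right c (by positivity)).mono fun _ _ ↦
    Nat.lt_two_pow_self.le

theorem mul (hf : IsQuadExp f) (hg : IsQuadExp g) : IsQuadExp fun h ↦ f h * g h := by
  obtain ⟨C, hC⟩ := hf
  obtain ⟨C', hC'⟩ := hg
  refine ⟨C + C', fun h hh ↦ ?_⟩
  rw [add_mul, pow_add]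
  exact Nat.mul_le_mul (hC h hh) (hC' h hh)

theorem add (hf : IsQuadExp f) (hg : IsQuadExp g) : IsQuadExp fun h ↦ f h + g h := by
  obtain ⟨C, hC⟩ := hf
  obtain ⟨C', hC'⟩ := hg
  refine ((const 2).mul (two_pow (C + C') fun h _ ↦ le_rfl)).mono fun h hh ↦ ?_
  rw [two_mul]
  refine add_le_add ((hC h hh).trans ?_) ((hC' h hh).trans ?_) <;> gcongr <;> omega

theorem pow (hf : IsQuadExp f) (n : ℕ) : IsQuadExp fun h ↦ f h ^ n := by
  induction n with
  | zero => simpa only [pow_zero] using const 1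
  | succ n ih => simpa only [pow_succ] using ih.mul hf

end IsQuadExp

variable (m : ℕ)

theorem isQuadExp_maxPeriodCount : IsQuadExp (maxPeriodCount m) := by
  have hid : IsQuadExp fun h ↦ h :=
    (IsQuadExp.two_pow 1 fun h hh ↦ by nlinarith).mono fun h _ ↦ (Nat.lt_two_pow_self (n := h)).le
  exact (IsQuadExp.const _).mul hid

theorem IsQuadExp.maxPeriodCount_pow {f : ℕ → ℕ} {c : ℕ} (hf : ∀ h, 1 ≤ h → f h ≤ 2 ^ (c * h)) :
    IsQuadExp fun h ↦ f h ^ maxPeriodCount m h := by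
  refine ⟨c * 2 ^ (2 * m + 4), fun h hh ↦ ?_⟩
  calc f h ^ maxPeriodCount m h ≤ (2 ^ (c * h)) ^ maxPeriodCount m h :=
        Nat.pow_le_pow_left (hf h hh) _
    _ = 2 ^ (c * 2 ^ (2 * m + 4) * h ^ 2) := by
        rw [← pow_mul, maxPeriodCount]
        ring_nf

theorem isQuadExp_maxBlock : IsQuadExp (maxBlock m) :=
  .maxPeriodCount_pow (c := 3) m fun h hh ↦ Nat.pow_le_pow_right two_pos (by omega)

theorem isQuadExp_maxBase : IsQuadExp (maxBase m) :=
  (IsQuadExp.two_pow 2 fun h hh ↦ by nlinarith).add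
    ((isQuadExp_maxPeriodCount m).mul (isQuadExp_maxBlock m))

theorem isQuadExp_numPeriodSets : IsQuadExp (numPeriodSets m) := by
  refine .maxPeriodCount_pow (c := 4 * m) m fun h hh ↦ ?_
  calc (maxPeriod h + 1) ^ m ≤ (2 ^ (4 * h)) ^ m :=
        Nat.pow_le_pow_left (Nat.pow_lt_pow_right one_lt_two (by omega)) m
    _ = 2 ^ (4 * m * h) := by rw [← pow_mul, mul_right_comm]

theorem isQuadExp_maxHead : IsQuadExp (maxHead m) :=
  (((isQuadExp_maxBase m).add
    (((isQuadExp_numPeriodSets m).add (.const 1)).mul (isQuadExp_maxBlock m))).add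
    ((IsQuadExp.const m).mul (isQuadExp_numPeriodSets m))).add (.const 1)

theorem isQuadExp_stateBound : IsQuadExp (stateBound m) := by
  have hhead := isQuadExp_maxHead m
  have hblock := isQuadExp_maxBlock m
  exact ((((IsQuadExp.const (m + 1)).mul hhead).add (.const 1)).mul
    (((hhead.add (.const 1)).pow m).mul ((hblock.add (.const 1)).pow m))).add (.const 1)

end QuadraticExponent

end ParikhDFA

/-- For every `m ≥ 1` there is a constant `C > 0` such that every CFG in
Chomsky normal form with `h ≥ 1` variables over a terminal alphabet of `m` letters admits
a Parikh equivalent DFA with at most `2^{C·h²}` states. -/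
theorem cnf_to_parikh_equivalent_dfa (m : ℕ) (hm : 1 ≤ m) :
    ∃ C : ℕ, 0 < C ∧
      ∀ h : ℕ, 1 ≤ h →
      ∀ G : ContextFreeGrammar (Fin m), IsCNF G →
      ∀ fG : Fintype G.NT, @Fintype.card G.NT fG = h →
      ∃ (σ : Type) (_ : Fintype σ) (B : DFA (Fin m) σ),
        Fintype.card σ ≤ 2 ^ (C * h ^ 2) ∧
        parikhImage B.accepts = parikhImage G.language := by
  obtain ⟨C, hC⟩ := ParikhDFA.isQuadExp_stateBound m
  refine ⟨C + 1, Nat.succ_pos C, ?_⟩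
  rintro _ hh G hG _ rfl
  obtain ⟨σ, fσ, A, hcard, hA⟩ := ParikhDFA.exists_dfa_card_le_stateBound hG hh
  refine ⟨σ, fσ, A, ?_, hA⟩
  calc Fintype.card σ ≤ ParikhDFA.stateBound m (Fintype.card G.NT) := hcard
    _ ≤ 2 ^ (C * Fintype.card G.NT ^ 2) := hC _ hh
    _ ≤ 2 ^ ((C + 1) * Fintype.card G.NT ^ 2) := by
      gcongr
      exacts [one_le_two, Nat.le_succ C]
end
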